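/- arXiv:2512.01905 — 3 statements merged into one kernel-verified Lean document; each statement's English description precedes it below -/
import Mathlib

section
/- Every minimally 1-tough series-parallel graph is a cycle. -/
open SimpleGraph

noncomputable def numComp {V : Type*} (G : SimpleGraph V) (S : Set V) : ℕ :=
  Nat.card (SimpleGraph.induce Sᶜ G).ConnectedComponent

def IsCutset {V : Type*} (G : SimpleGraph V) (S : Set V) : Prop := 1 < numComp G S

noncomputable def toughness {V : Type*} (G : SimpleGraph V) : ℝ :=
  sInf {r : ℝ | ∃ S : Set V, IsCutset G S ∧ r = (S.ncard : ℝ) / (numComp G S : ℝ)}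

def IsToughSet {V : Type*} (G : SimpleGraph V) (S : Set V) : Prop :=
  IsCutset G S ∧ (S.ncard : ℝ) = toughness G * (numComp G S : ℝ)

def MinTough {V : Type*} (G : SimpleGraph V) (t : ℝ) : Prop :=
  toughness G = t ∧ ∀ e ∈ G.edgeSet, toughness (G.deleteEdges {e}) < t

def IsCutVertex {V : Type*} (G : SimpleGraph V) (x : V) : Prop := IsCutset G {x}

inductive SPTree (V : Type*) where
  | edge (u v : V) : SPTree V
  | series (l r : SPTree V) : SPTree V
  | parallel (l r : SPTree V) : SPTree V

namespace SPTree

def src {V : Type*} : SPTree V → V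
  | edge u _ => u
  | series l _ => l.src
  | parallel l _ => l.src

def tgt {V : Type*} : SPTree V → V
  | edge _ v => v
  | series _ r => r.tgt
  | parallel l _ => l.tgt

def verts {V : Type*} : SPTree V → Set V
  | edge u v => {u, v}
  | series l r => l.verts ∪ r.verts
  | parallel l r => l.verts ∪ r.verts

def edges {V : Type*} : SPTree V → Set (Sym2 V)
  | edge u v => {s(u, v)}
  | series l r => l.edges ∪ r.edges
  | parallel l r => l.edges ∪ r.edges

def WF {V : Type*} : SPTree V → Prop
  | edge u v => u ≠ v
  | series l r => l.WF ∧ r.WF ∧ l.tgt = r.src ∧ l.verts ∩ r.verts = {l.tgt}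
  | parallel l r => l.WF ∧ r.WF ∧ l.src = r.src ∧ l.tgt = r.tgt ∧
      l.verts ∩ r.verts = {l.src, l.tgt} ∧ Disjoint l.edges r.edges

end SPTree

/-- `G` is the series-parallel graph given by the (well-formed, spanning) sp-tree `T`. -/
def RepresentsSP {V : Type*} (G : SimpleGraph V) (T : SPTree V) : Prop :=
  T.WF ∧ T.verts = Set.univ ∧ G = SimpleGraph.fromEdgeSet T.edges

def IsSPGraph {V : Type*} (G : SimpleGraph V) : Prop := ∃ T : SPTree V, RepresentsSP G T

section Toughness

variable {V : Type*}

/-- A labelling constant along the edges of `G - S` that takes `j` values bounds the number of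
components of `G - S` from below. -/
theorem le_numComp_of_labelling [Finite V] {G : SimpleGraph V} {S : Set V} {j : ℕ} (f : V → ℕ)
    (hf : ∀ x y, x ∉ S → y ∉ S → G.Adj x y → f x = f y)
    (hsurj : ∀ i < j, ∃ x, x ∉ S ∧ f x = i) : j ≤ numComp G S := by
  choose g hgS hgf using hsurj
  have hreach : ∀ x y : (Sᶜ : Set V), (induce Sᶜ G).Reachable x y → f x = f y := by
    rintro x y ⟨p⟩
    induction p with
    | nil => rfl
    | @cons u v _ hadj _ ih => exact (hf u v u.2 v.2 hadj).trans ih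
  let φ : Fin j → (induce Sᶜ G).ConnectedComponent := fun i =>
    (induce Sᶜ G).connectedComponentMk ⟨g i i.2, hgS i i.2⟩
  have hφ : Function.Injective φ := by
    intro a b hab
    have := hreach _ _ (ConnectedComponent.exact hab)
    simp only [hgf] at this
    exact Fin.ext this
  simpa [numComp] using Nat.card_le_card_of_injective φ hφ

theorem numComp_le_ncard_of_one_le_toughness [Finite V] {G : SimpleGraph V} {S : Set V}
    (hG : 1 ≤ toughness G) (hS : IsCutset G S) : numComp G S ≤ S.ncard := by
  have hpos : (0 : ℝ) < numComp G S := by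
    have : 0 < numComp G S := lt_trans Nat.zero_lt_one hS
    exact_mod_cast this
  have hle : toughness G ≤ (S.ncard : ℝ) / numComp G S := by
    refine csInf_le ⟨0, ?_⟩ ⟨S, hS, rfl⟩
    rintro r ⟨S', -, rfl⟩
    positivity
  have := (one_le_div hpos).1 (hG.trans hle)
  exact_mod_cast this

theorem exists_isCutset_of_toughness_ne_zero {G : SimpleGraph V} (hG : toughness G ≠ 0) :
    ∃ S, IsCutset G S := by
  by_contra! hno
  refine hG ?_
  have : {r : ℝ | ∃ S : Set V, IsCutset G S ∧ r = (S.ncard : ℝ) / (numComp G S : ℝ)} = ∅ := by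
    ext r
    simp [hno]
  rw [toughness, this, Real.sInf_empty]

theorem IsCutset.exists_not_adj {G : SimpleGraph V} {S : Set V} (hS : IsCutset G S) :
    ∃ x y, x ≠ y ∧ ¬ G.Adj x y := by
  have hfin : Finite (induce Sᶜ G).ConnectedComponent :=
    Nat.finite_of_card_ne_zero (lt_trans Nat.zero_lt_one hS).ne'
  obtain ⟨a, b, hab⟩ := (Finite.one_lt_card_iff_nontrivial.1 hS).exists_pair_ne
  induction a using ConnectedComponent.ind with | _ x
  induction b using ConnectedComponent.ind with | _ y
  refine ⟨x, y, fun h => hab ?_, fun h => hab ?_⟩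
  · rw [Subtype.ext h]
  · exact ConnectedComponent.sound (Adj.reachable (G := induce Sᶜ G) h)

theorem isCutset_compl_pair [Finite V] {G : SimpleGraph V} {u v : V} (huv : u ≠ v)
    (hadj : ¬ G.Adj u v) : IsCutset G {u, v}ᶜ := by
  classical
  refine le_numComp_of_labelling (j := 2) (fun x => if x = u then 0 else 1) ?_ ?_
  · intro x y hx hy hxy
    simp only [Set.mem_compl_iff, Set.mem_insert_iff, Set.mem_singleton_iff, not_not] at hx hy
    rcases hx with rfl | rfl <;> rcases hy with rfl | rfl
    · rfl
    · exact absurd hxy hadj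
    · exact absurd hxy.symm hadj
    · rfl
  · intro i hi
    interval_cases i
    · exact ⟨u, by simp⟩
    · exact ⟨v, by simp [huv.symm]⟩

/-- A graph with a Hamiltonian cycle `σ 0, σ 1, …, σ n` has no set violating `1`-toughness. -/
theorem numComp_le_ncard_of_hamiltonian [Finite V] {G : SimpleGraph V} {n : ℕ}
    (σ : Fin (n + 1) ≃ V) (hσ : ∀ i, G.Adj (σ i) (σ (i + 1))) {S : Set V} (hS : IsCutset G S) :
    numComp G S ≤ S.ncard := by
  have hfin : Finite (induce Sᶜ G).ConnectedComponent :=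
    Nat.finite_of_card_ne_zero (lt_trans Nat.zero_lt_one hS).ne'
  have hnontriv := Finite.one_lt_card_iff_nontrivial.1 hS
  have hexit : ∀ C : (induce Sᶜ G).ConnectedComponent, ∃ i : Fin (n + 1),
      ∃ h : σ i ∉ S, (induce Sᶜ G).connectedComponentMk ⟨σ i, h⟩ = C ∧ σ (i + 1) ∈ S := by
    intro C
    by_contra! hno
    obtain ⟨D, hD⟩ := exists_ne C
    have hstep : ∀ i : Fin (n + 1), (∃ h : σ i ∉ S,
        (induce Sᶜ G).connectedComponentMk ⟨σ i, h⟩ = C) → ∃ h : σ (i + 1) ∉ S,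
        (induce Sᶜ G).connectedComponentMk ⟨σ (i + 1), h⟩ = C := by
      rintro i ⟨h, hC⟩
      refine ⟨hno i h hC, hC ▸ ConnectedComponent.sound ?_⟩
      exact Adj.reachable (G := induce Sᶜ G) (hσ i).symm
    obtain ⟨x, rfl⟩ := C.exists_rep
    obtain ⟨y, rfl⟩ := D.exists_rep
    have hall : ∀ k : Fin (n + 1), ∃ h : σ (σ.symm x + k) ∉ S,
        (induce Sᶜ G).connectedComponentMk ⟨σ (σ.symm x + k), h⟩ =
          (induce Sᶜ G).connectedComponentMk x := by
      intro k
      induction k using Fin.induction with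
      | zero => simpa using (show (x : V) ∉ S from x.2)
      | succ k ih =>
        rw [← Fin.coeSucc_eq_succ, ← add_assoc]
        exact hstep _ ih
    obtain ⟨h, hC⟩ := hall (σ.symm y - σ.symm x)
    simp only [add_sub_cancel, Equiv.apply_symm_apply] at hC
    exact hD hC
  choose i hiS hiC hi using hexit
  let φ : (induce Sᶜ G).ConnectedComponent → S := fun C => ⟨σ (i C + 1), hi C⟩
  have hφ : Function.Injective φ := by
    intro C D hCD
    have h : i C = i D := by simpa [φ] using hCD
    rw [← hiC C, ← hiC D]
    simp only [h]
  exact Nat.card_le_card_of_injective φ hφ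

/-- A minimally `1`-tough graph with a Hamiltonian cycle is that cycle. -/
theorem MinTough.nonempty_iso_cycleGraph [Finite V] {G : SimpleGraph V} (hG : MinTough G 1) {n : ℕ}
    (σ : Fin (n + 3) ≃ V) (hσ : ∀ i, G.Adj (σ i) (σ (i + 1))) :
    Nonempty (G ≃g cycleGraph (n + 3)) := by
  have key : ∀ i j, G.Adj (σ i) (σ j) → j = i + 1 ∨ i = j + 1 := by
    intro i j hij
    by_contra! hne
    have hlt := hG.2 s(σ i, σ j) hij
    have hσ' : ∀ k, (G.deleteEdges {s(σ i, σ j)}).Adj (σ k) (σ (k + 1)) := by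
      intro k
      rw [deleteEdges_adj]
      refine ⟨hσ k, fun hk => ?_⟩
      rw [Set.mem_singleton_iff, Sym2.eq_iff] at hk
      simp only [σ.injective.eq_iff] at hk
      grind
    have hcut : IsCutset (G.deleteEdges {s(σ i, σ j)}) {σ i, σ j}ᶜ :=
      isCutset_compl_pair hij.ne (by simp)
    obtain ⟨r, ⟨S, hS, rfl⟩, hr⟩ := exists_lt_of_csInf_lt (by exact ⟨_, _, hcut, rfl⟩) hlt
    have hpos : (0 : ℝ) < numComp (G.deleteEdges {s(σ i, σ j)}) S := by
      have : 0 < numComp (G.deleteEdges {s(σ i, σ j)}) S := lt_trans Nat.zero_lt_one hS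
      exact_mod_cast this
    rw [div_lt_one hpos] at hr
    exact absurd (numComp_le_ncard_of_hamiltonian σ hσ' hS) (not_le.2 (by exact_mod_cast hr))
  refine ⟨(RelIso.mk σ ?_ : cycleGraph (n + 3) ≃g G).symm⟩
  intro i j
  rw [cycleGraph_adj]
  constructor
  · intro h
    rcases key i j h with rfl | rfl <;> simp
  · rintro (h | h)
    · have := hσ j
      rw [← h, add_sub_cancel] at this
      exact this.symm
    · have := hσ i
      rwa [← h, add_sub_cancel] at this

end Toughness

namespace SPTree

variable {V : Type*}

/-- The number of series pieces among which a tree splits at its terminals. -/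
def pieces : SPTree V → ℕ
  | edge _ _ => 0
  | series _ _ => 1
  | parallel l r => l.pieces + r.pieces

theorem src_mem_verts (T : SPTree V) : T.src ∈ T.verts := by
  induction T with
  | edge u v => simp [src, verts]
  | series l r ihl _ => exact Or.inl ihl
  | parallel l r ihl _ => exact Or.inl ihl

theorem tgt_mem_verts (T : SPTree V) : T.tgt ∈ T.verts := by
  induction T with
  | edge u v => simp [tgt, verts]
  | series l r _ ihr => exact Or.inr ihr
  | parallel l r ihl _ => exact Or.inl ihl

theorem left_mem_verts {T : SPTree V} {x y : V} (h : s(x, y) ∈ T.edges) : x ∈ T.verts := by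
  induction T with
  | edge u v =>
    simp only [edges, Set.mem_singleton_iff, Sym2.eq_iff] at h
    simp only [verts, Set.mem_insert_iff, Set.mem_singleton_iff]
    tauto
  | series l r ihl ihr => exact h.imp ihl ihr
  | parallel l r ihl ihr => exact h.imp ihl ihr

theorem right_mem_verts {T : SPTree V} {x y : V} (h : s(x, y) ∈ T.edges) : y ∈ T.verts :=
  left_mem_verts (Sym2.eq_swap ▸ h)

theorem eq_of_mem_verts_series {l r : SPTree V} (h : (series l r).WF) {x : V} (hl : x ∈ l.verts)
    (hr : x ∈ r.verts) : x = l.tgt :=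
  Set.mem_singleton_iff.1 (h.2.2.2 ▸ ⟨hl, hr⟩)

theorem eq_of_mem_verts_parallel {l r : SPTree V} (h : (parallel l r).WF) {x : V}
    (hl : x ∈ l.verts) (hr : x ∈ r.verts) : x = l.src ∨ x = l.tgt := by
  have : x ∈ ({l.src, l.tgt} : Set V) := h.2.2.2.2.1 ▸ ⟨hl, hr⟩
  simpa using this

theorem WF.src_ne_tgt {T : SPTree V} (h : T.WF) : T.src ≠ T.tgt := by
  induction T with
  | edge u v => exact h
  | series l r ihl ihr =>
    intro heq
    have hmem : l.src ∈ r.verts := by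
      rw [show l.src = r.tgt from heq]
      exact r.tgt_mem_verts
    exact ihl h.1 (eq_of_mem_verts_series h l.src_mem_verts hmem)
  | parallel l r ihl ihr => exact ihl h.1

theorem src_notMem_right_of_series {l r : SPTree V} (h : (series l r).WF) : l.src ∉ r.verts :=
  fun hr => h.1.src_ne_tgt (eq_of_mem_verts_series h l.src_mem_verts hr)

theorem tgt_notMem_left_of_series {l r : SPTree V} (h : (series l r).WF) : r.tgt ∉ l.verts :=
  fun hl => h.2.1.src_ne_tgt (h.2.2.1 ▸ (eq_of_mem_verts_series h hl r.tgt_mem_verts).symm)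

/-- A tree without series pieces is a single edge. -/
theorem WF.eq_edge_of_pieces_eq_zero {T : SPTree V} (h : T.WF) (h0 : T.pieces = 0) :
    T = edge T.src T.tgt := by
  induction T with
  | edge u v => rfl
  | series l r => simp [pieces] at h0
  | parallel l r ihl ihr =>
    obtain ⟨hl, hr, hs, ht, -, hdisj⟩ := h
    simp only [pieces, Nat.add_eq_zero_iff] at h0
    rw [ihl hl h0.1, ihr hr h0.2, hs, ht] at hdisj
    simp [edges] at hdisj

theorem verts_parallel_of_right {l r : SPTree V} (h : (parallel l r).WF) (hr : r.pieces = 0) :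
    (parallel l r).verts = l.verts := by
  refine Set.union_eq_left.2 ?_
  rw [h.2.1.eq_edge_of_pieces_eq_zero hr, ← h.2.2.1, ← h.2.2.2.1]
  rintro x (rfl | rfl)
  exacts [l.src_mem_verts, l.tgt_mem_verts]

theorem verts_parallel_of_left {l r : SPTree V} (h : (parallel l r).WF) (hl : l.pieces = 0) :
    (parallel l r).verts = r.verts := by
  refine Set.union_eq_right.2 ?_
  rw [h.1.eq_edge_of_pieces_eq_zero hl, h.2.2.1, h.2.2.2.1]
  rintro x (rfl | rfl)
  exacts [r.src_mem_verts, r.tgt_mem_verts]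

theorem WF.exists_labelling {T : SPTree V} (h : T.WF) : ∃ f : V → ℕ,
    (∀ x y, x ≠ T.src → x ≠ T.tgt → y ≠ T.src → y ≠ T.tgt → s(x, y) ∈ T.edges → f x = f y) ∧
    ∀ i < T.pieces, ∃ x ∈ T.verts, x ≠ T.src ∧ x ≠ T.tgt ∧ f x = i := by
  classical
  induction T with
  | edge u v => exact ⟨fun _ => 0, by simp, by simp [pieces]⟩
  | series l r _ _ =>
    refine ⟨fun _ => 0, by simp, fun i hi => ⟨l.tgt, Or.inl l.tgt_mem_verts,
      h.1.src_ne_tgt.symm, ?_, ?_⟩⟩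
    · rw [h.2.2.1]
      exact h.2.1.src_ne_tgt
    · simp only [pieces, Nat.lt_one_iff] at hi
      exact hi.symm
  | parallel l r ihl ihr =>
    obtain ⟨f, hf, hfs⟩ := ihl h.1
    obtain ⟨g, hg, hgs⟩ := ihr h.2.1
    have hs := h.2.2.1
    have ht := h.2.2.2.1
    have hinter := fun x => eq_of_mem_verts_parallel (x := x) h
    refine ⟨fun x => if x ∈ l.verts then f x else l.pieces + g x, ?_, ?_⟩
    · intro x y hxs hxt hys hyt hxy
      simp only [src, tgt] at hxs hxt hys hyt
      rcases hxy with hxy | hxy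
      · simp only [left_mem_verts hxy, right_mem_verts hxy, if_true]
        exact hf x y hxs hxt hys hyt hxy
      · have hx : x ∉ l.verts := fun hx => by
          have := hinter x hx (left_mem_verts hxy)
          tauto
        have hy : y ∉ l.verts := fun hy => by
          have := hinter y hy (right_mem_verts hxy)
          tauto
        simp only [hx, hy, if_false]
        rw [hg x y (hs ▸ hxs) (ht ▸ hxt) (hs ▸ hys) (ht ▸ hyt) hxy]
    · intro i hi
      by_cases hil : i < l.pieces
      · obtain ⟨x, hx, hxs, hxt, hxi⟩ := hfs i hil
        exact ⟨x, Or.inl hx, hxs, hxt, by simp [hx, hxi]⟩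
      · obtain ⟨x, hx, hxs, hxt, hxi⟩ := hgs (i - l.pieces) (by simp only [pieces] at hi; omega)
        rw [← hs] at hxs
        rw [← ht] at hxt
        have hxl : x ∉ l.verts := fun hxl => by
          have := hinter x hxl hx
          tauto
        exact ⟨x, Or.inr hx, hxs, hxt, by simp only [hxl, if_false, hxi]; omega⟩

/-- Every edge of `G` at a non-terminal vertex of `T` is an edge of `T`. -/
def Encloses (T : SPTree V) (G : SimpleGraph V) : Prop :=
  ∀ x y, x ∈ T.verts → x ≠ T.src → x ≠ T.tgt → G.Adj x y → s(x, y) ∈ T.edges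

section Encloses

variable {G : SimpleGraph V} {l r : SPTree V}

theorem Encloses.series_left (hG : (series l r).Encloses G) (h : (series l r).WF) :
    l.Encloses G := by
  intro x y hx hxs hxt hxy
  refine (hG x y (Or.inl hx) hxs ?_ hxy).resolve_right fun hr =>
    hxt (eq_of_mem_verts_series h hx (left_mem_verts hr))
  rintro rfl
  exact tgt_notMem_left_of_series h hx

theorem Encloses.series_right (hG : (series l r).Encloses G) (h : (series l r).WF) :
    r.Encloses G := by
  intro x y hx hxs hxt hxy
  refine (hG x y (Or.inr hx) ?_ hxt hxy).resolve_left fun hl =>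
    hxs (h.2.2.1 ▸ eq_of_mem_verts_series h (left_mem_verts hl) hx)
  rintro rfl
  exact src_notMem_right_of_series h hx

theorem Encloses.parallel_left (hG : (parallel l r).Encloses G) (h : (parallel l r).WF) :
    l.Encloses G := by
  intro x y hx hxs hxt hxy
  refine (hG x y (Or.inl hx) hxs hxt hxy).resolve_right fun hr => ?_
  have := eq_of_mem_verts_parallel h hx (left_mem_verts hr)
  tauto

theorem Encloses.parallel_right (hG : (parallel l r).Encloses G) (h : (parallel l r).WF) :
    r.Encloses G := by
  intro x y hx hxs hxt hxy
  rw [← h.2.2.1] at hxs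
  rw [← h.2.2.2.1] at hxt
  refine (hG x y (Or.inr hx) hxs hxt hxy).resolve_left fun hl => ?_
  have := eq_of_mem_verts_parallel h (left_mem_verts hl) hx
  tauto

theorem Encloses.exists_labelling {T : SPTree V} (hG : T.Encloses G) (h : T.WF) :
    ∃ f : V → ℕ, (∀ x y, x ∉ ({T.src, T.tgt} : Set V) → y ∉ ({T.src, T.tgt} : Set V) →
      G.Adj x y → f x = f y) ∧
    (∀ i < T.pieces, ∃ x, x ∉ ({T.src, T.tgt} : Set V) ∧ f x = i) ∧
    ∀ z, z ∉ T.verts → f z = T.pieces := by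
  classical
  obtain ⟨f, hf, hfs⟩ := h.exists_labelling
  simp only [Set.mem_insert_iff, Set.mem_singleton_iff, not_or]
  refine ⟨fun x => if x ∈ T.verts then f x else T.pieces, ?_, ?_, fun z hz => if_neg hz⟩
  · rintro x y ⟨hxs, hxt⟩ ⟨hys, hyt⟩ hxy
    by_cases hmem : x ∈ T.verts ∨ y ∈ T.verts
    · have hedge : s(x, y) ∈ T.edges := hmem.elim (fun hx => hG x y hx hxs hxt hxy)
        fun hy => Sym2.eq_swap ▸ hG y x hy hys hyt hxy.symm
      simp only [left_mem_verts hedge, right_mem_verts hedge, if_true]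
      exact hf x y hxs hxt hys hyt hedge
    · rw [not_or] at hmem
      simp only [hmem.1, hmem.2, if_false]
  · intro i hi
    obtain ⟨x, hx, hxs, hxt, rfl⟩ := hfs i hi
    exact ⟨x, ⟨hxs, hxt⟩, if_pos hx⟩

theorem Encloses.pieces_le_two [Finite V] {T : SPTree V} (hG : T.Encloses G) (h : T.WF)
    (htough : 1 ≤ toughness G) : T.pieces ≤ 2 := by
  obtain ⟨f, hf, hfs, -⟩ := hG.exists_labelling h
  by_contra! hlt
  have hle := le_numComp_of_labelling f hf hfs
  have hcut : IsCutset G {T.src, T.tgt} := lt_of_lt_of_le (by omega) hle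
  have := numComp_le_ncard_of_one_le_toughness htough hcut
  rw [Set.ncard_pair h.src_ne_tgt] at this
  omega

theorem Encloses.pieces_le_one [Finite V] {T : SPTree V} (hG : T.Encloses G) (h : T.WF)
    (htough : 1 ≤ toughness G) {z : V} (hz : z ∉ T.verts) : T.pieces ≤ 1 := by
  obtain ⟨f, hf, hfs, hfz⟩ := hG.exists_labelling h
  by_contra! hlt
  have hle : T.pieces + 1 ≤ numComp G {T.src, T.tgt} := by
    refine le_numComp_of_labelling f hf fun i hi => ?_
    rcases (Nat.lt_succ_iff_lt_or_eq.1 hi) with hi | rfl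
    · exact hfs i hi
    · refine ⟨z, ?_, hfz z hz⟩
      rintro (rfl | rfl)
      exacts [hz T.src_mem_verts, hz T.tgt_mem_verts]
  have hcut : IsCutset G {T.src, T.tgt} := lt_of_lt_of_le (by omega) hle
  have := numComp_le_ncard_of_one_le_toughness htough hcut
  rw [Set.ncard_pair h.src_ne_tgt] at this
  omega

end Encloses

/-- `T` has a Hamiltonian path between its terminals. -/
def HasHamPath (T : SPTree V) : Prop :=
  ∃ w : List V, (T.src :: (w ++ [T.tgt])).IsChain (fun x y => s(x, y) ∈ T.edges) ∧
    (T.src :: (w ++ [T.tgt])).Nodup ∧ ∀ x, x ∈ T.src :: (w ++ [T.tgt]) ↔ x ∈ T.verts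

/-- `T` has a Hamiltonian cycle. -/
def HasHamCycle (T : SPTree V) : Prop :=
  ∃ (a : V) (w : List V), 2 ≤ w.length ∧
    (a :: (w ++ [a])).IsChain (fun x y => s(x, y) ∈ T.edges) ∧
    (a :: w).Nodup ∧ ∀ x, x ∈ a :: w ↔ x ∈ T.verts

theorem HasHamPath.series {l r : SPTree V} (hl : l.HasHamPath) (hr : r.HasHamPath)
    (h : (series l r).WF) : (series l r).HasHamPath := by
  obtain ⟨p, hpc, hpn, hpm⟩ := hl
  obtain ⟨q, hqc, hqn, hqm⟩ := hr
  rw [← h.2.2.1] at hqc hqn hqm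
  have hinter := fun x => eq_of_mem_verts_series (x := x) h
  have hsplit : l.src :: ((p ++ l.tgt :: q) ++ [r.tgt]) =
      (l.src :: p) ++ l.tgt :: (q ++ [r.tgt]) := by simp
  refine ⟨p ++ l.tgt :: q, ?_, ?_, ?_⟩ <;> simp only [src, tgt, hsplit]
  · rw [List.isChain_split]
    exact ⟨hpc.imp fun _ _ => Or.inl, hqc.imp fun _ _ => Or.inr⟩
  · rw [List.nodup_append]
    rw [← List.cons_append, List.nodup_append] at hpn
    refine ⟨hpn.1, hqn, ?_⟩
    rintro x hx _ hy rfl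
    refine hpn.2.2 x hx l.tgt (by simp) (hinter x ((hpm x).1 ?_) ((hqm x).1 hy))
    rw [← List.cons_append]
    exact List.mem_append_left _ hx
  · intro x
    simp only [verts, Set.mem_union, ← hpm, ← hqm, List.mem_append, List.mem_cons]
    tauto

theorem HasHamPath.hasHamCycle_parallel {l r : SPTree V} (hl : l.HasHamPath) (hr : r.HasHamPath)
    (h : (parallel l r).WF) : (parallel l r).HasHamCycle := by
  obtain ⟨p, hpc, hpn, hpm⟩ := hl
  obtain ⟨q, hqc, hqn, hqm⟩ := hr
  rw [← h.2.2.1, ← h.2.2.2.1] at hqc hqn hqm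
  have hinter := fun x => eq_of_mem_verts_parallel (x := x) h
  refine ⟨l.src, p ++ l.tgt :: q.reverse, ?_, ?_, ?_, ?_⟩
  · have hdisj := h.2.2.2.2.2
    rcases p with _ | ⟨a, p⟩
    · rcases q with _ | ⟨b, q⟩
      · simp only [List.nil_append, List.isChain_cons_cons] at hpc hqc
        exact absurd hqc.1 (Set.disjoint_left.1 hdisj hpc.1)
      · simp
    · simp only [List.length_append, List.length_cons]
      omega
  · have hsplit : l.src :: ((p ++ l.tgt :: q.reverse) ++ [l.src]) =
        (l.src :: p) ++ l.tgt :: (q.reverse ++ [l.src]) := by simp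
    have hrev : l.tgt :: (q.reverse ++ [l.src]) = (l.src :: (q ++ [l.tgt])).reverse := by simp
    rw [hsplit, List.isChain_split, hrev, List.isChain_reverse]
    refine ⟨hpc.imp fun _ _ => Or.inl, hqc.imp fun x y hxy => Or.inr ?_⟩
    exact Sym2.eq_swap ▸ hxy
  · simp only [List.nodup_cons, List.nodup_append, List.mem_append, List.mem_cons,
      List.mem_reverse, List.nodup_reverse] at hpn hqn hpm hqm ⊢
    grind
  · intro x
    simp only [verts, Set.mem_union, ← hpm, ← hqm, List.mem_append, List.mem_cons,
      List.mem_reverse]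
    tauto

theorem Encloses.hasHamPath [Finite V] {G : SimpleGraph V} {T : SPTree V} (hG : T.Encloses G)
    (h : T.WF) (htough : 1 ≤ toughness G) (h1 : T.pieces ≤ 1) : T.HasHamPath := by
  induction T with
  | edge u v =>
    refine ⟨[], ?_, ?_, ?_⟩
    · simp [src, tgt, edges]
    · simpa [src, tgt] using h.src_ne_tgt
    · simp [src, tgt, verts]
  | series l r ihl ihr =>
    have hl := hG.series_left h
    have hr := hG.series_right h
    exact HasHamPath.series
      (ihl hl h.1 (hl.pieces_le_one h.1 htough (tgt_notMem_left_of_series h)))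
      (ihr hr h.2.1 (hr.pieces_le_one h.2.1 htough (src_notMem_right_of_series h))) h
  | parallel l r ihl ihr =>
    simp only [pieces] at h1
    by_cases hr : r.pieces = 0
    · obtain ⟨w, hc, hn, hm⟩ := ihl (hG.parallel_left h) h.1 (by omega)
      exact ⟨w, hc.imp fun _ _ => Or.inl, hn,
        fun x => by rw [verts_parallel_of_right h hr]; exact hm x⟩
    · obtain ⟨w, hc, hn, hm⟩ := ihr (hG.parallel_right h) h.2.1 (by omega)
      rw [← h.2.2.1, ← h.2.2.2.1] at hc hn hm
      exact ⟨w, hc.imp fun _ _ => Or.inr, hn,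
        fun x => by rw [verts_parallel_of_left h (by omega)]; exact hm x⟩

theorem Encloses.hasHamCycle [Finite V] {G : SimpleGraph V} {T : SPTree V} (hG : T.Encloses G)
    (h : T.WF) (htough : 1 ≤ toughness G) (hT : ∃ l r, T = parallel l r) : T.HasHamCycle := by
  have hle := hG.pieces_le_two h htough
  induction T with
  | edge u v => simp at hT
  | series l r => simp at hT
  | parallel l r ihl ihr =>
    simp only [pieces] at hle
    have hl := hG.parallel_left h
    have hr := hG.parallel_right h
    by_cases hl1 : l.pieces ≤ 1
    · by_cases hr1 : r.pieces ≤ 1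
      · exact (hl.hasHamPath h.1 htough hl1).hasHamCycle_parallel
          (hr.hasHamPath h.2.1 htough hr1) h
      · cases r with
        | edge u v => simp [pieces] at hr1
        | series a b => simp [pieces] at hr1
        | parallel a b =>
          obtain ⟨s, w, hw, hc, hn, hm⟩ := ihr hr h.2.1 ⟨a, b, rfl⟩ (by omega)
          exact ⟨s, w, hw, hc.imp fun _ _ => Or.inr, hn,
            fun x => by rw [verts_parallel_of_left h (by omega)]; exact hm x⟩
    · cases l with
      | edge u v => simp [pieces] at hl1
      | series a b => simp [pieces] at hl1
      | parallel a b =>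
        obtain ⟨s, w, hw, hc, hn, hm⟩ := ihl hl h.1 ⟨a, b, rfl⟩ (by omega)
        exact ⟨s, w, hw, hc.imp fun _ _ => Or.inl, hn,
          fun x => by rw [verts_parallel_of_right h (by omega)]; exact hm x⟩

/-- A Hamiltonian cycle of a spanning tree, as a cyclic enumeration of the vertices. -/
theorem HasHamCycle.exists_equiv {T : SPTree V} (hT : T.HasHamCycle) (hspan : T.verts = Set.univ) :
    ∃ (n : ℕ) (σ : Fin (n + 3) ≃ V), ∀ i, s(σ i, σ (i + 1)) ∈ T.edges := by
  obtain ⟨a, w, hw, hc, hn, hm⟩ := hT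
  obtain ⟨n, hlen⟩ : ∃ n, (a :: w).length = n + 3 :=
    ⟨w.length - 2, by simp only [List.length_cons]; omega⟩
  have hbij : Function.Bijective fun i : Fin (n + 3) => (a :: w)[i]'(by omega) := by
    constructor
    · intro i j hij
      exact Fin.ext ((List.Nodup.getElem_inj_iff hn).1 hij)
    · intro x
      obtain ⟨i, hi, rfl⟩ := List.getElem_of_mem ((hm x).2 (hspan ▸ Set.mem_univ x))
      exact ⟨⟨i, hlen ▸ hi⟩, rfl⟩
  refine ⟨n, Equiv.ofBijective _ hbij, fun i => ?_⟩
  rw [← List.cons_append, List.isChain_iff_getElem] at hc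
  have hi := hc i (by simp only [List.length_append, hlen, List.length_singleton]; omega)
  simp only [Equiv.ofBijective_apply, Fin.getElem_fin]
  rw [List.getElem_append_left (by omega)] at hi
  by_cases hlast : i = Fin.last (n + 2)
  · subst hlast
    rw [List.getElem_append_right (by simp [hlen])] at hi
    simpa using hi
  · have hval : ((i + 1 : Fin (n + 3)) : ℕ) = i + 1 :=
      Fin.val_add_one_of_lt (Fin.lt_last_iff_ne_last.2 hlast)
    rw [List.getElem_append_left (by have := (i + 1).isLt; omega)] at hi
    simpa only [hval] using hi

end SPTree

/-- Every minimally 1-tough series-parallel graph is a cycle. -/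
theorem minTough_one_sp_is_cycle {V : Type*} [Fintype V]
    (G : SimpleGraph V) (hsp : IsSPGraph G) (h : MinTough G 1) :
    ∃ n : ℕ, 3 ≤ n ∧ Nonempty (G ≃g SimpleGraph.cycleGraph n) := by
  classical
  obtain ⟨T, hT, hspan, rfl⟩ := hsp
  have htough : 1 ≤ toughness (fromEdgeSet T.edges) := h.1.ge
  have hencl : T.Encloses (fromEdgeSet T.edges) := fun x y _ _ _ hxy =>
    ((fromEdgeSet_adj _).1 hxy).1
  cases T with
  | edge u v =>
    obtain ⟨S, hS⟩ := exists_isCutset_of_toughness_ne_zero (h.1 ▸ one_ne_zero)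
    obtain ⟨x, y, hxy, hadj⟩ := hS.exists_not_adj
    have hx : x ∈ (SPTree.edge u v).verts := hspan ▸ Set.mem_univ x
    have hy : y ∈ (SPTree.edge u v).verts := hspan ▸ Set.mem_univ y
    simp only [SPTree.verts, SPTree.edges, Set.mem_insert_iff, Set.mem_singleton_iff,
      fromEdgeSet_adj, Sym2.eq_iff] at hx hy hadj
    grind
  | series l r =>
    have hcut : IsCutset (fromEdgeSet (SPTree.series l r).edges) {l.tgt} := by
      refine le_numComp_of_labelling (j := 2) (fun x => if x ∈ l.verts then 0 else 1) ?_ ?_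
      · intro x y hx hy hxy
        rcases ((fromEdgeSet_adj _).1 hxy).1 with hxy | hxy
        · simp [SPTree.left_mem_verts hxy, SPTree.right_mem_verts hxy]
        · have hxl : x ∉ l.verts := fun hxl =>
            hx (SPTree.eq_of_mem_verts_series hT hxl (SPTree.left_mem_verts hxy))
          have hyl : y ∉ l.verts := fun hyl =>
            hy (SPTree.eq_of_mem_verts_series hT hyl (SPTree.right_mem_verts hxy))
          simp [hxl, hyl]
      · intro i hi
        interval_cases i
        · exact ⟨l.src, hT.1.src_ne_tgt, if_pos l.src_mem_verts⟩
        · refine ⟨r.tgt, ?_, if_neg (SPTree.tgt_notMem_left_of_series hT)⟩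
          rw [hT.2.2.1]
          exact hT.2.1.src_ne_tgt.symm
    have hle := numComp_le_ncard_of_one_le_toughness htough hcut
    rw [Set.ncard_singleton] at hle
    exact absurd hcut (not_lt.2 hle)
  | parallel l r =>
    obtain ⟨n, σ, hσ⟩ := (hencl.hasHamCycle hT htough ⟨l, r, rfl⟩).exists_equiv hspan
    refine ⟨n + 3, by omega, h.nonempty_iso_cycleGraph σ fun i => ?_⟩
    refine (fromEdgeSet_adj _).2 ⟨hσ i, fun hi => ?_⟩
    simpa using σ.injective hi
end

section
/- A series-parallel graph G is minimally t-tough for some t with 1/2 < t < 1 if and only if G has toughness t and its series-parallel tree contains no jump-edges. -/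
open SimpleGraph

namespace SPTree

/-- The children of the (flattened, canonical) parallel node at the root of `t`
(or `[t]` if `t` is not a parallel node). -/
def parChildren {V : Type*} : SPTree V → List (SPTree V)
  | .parallel l r => parChildren l ++ parChildren r
  | t => [t]

/-- `pars true t` lists all (canonical, flattened) parallel nodes of the sp-tree `t`;
`pars false t` lists all of them except the root cluster when `t` itself is parallel. -/
def pars {V : Type*} : Bool → SPTree V → List (SPTree V)
  | _, .edge _ _ => []
  | _, .series l r => pars true l ++ pars true r
  | b, .parallel l r => (if b then [.parallel l r] else []) ++ pars false l ++ pars false r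

def IsEdgeLeaf {V : Type*} : SPTree V → Prop
  | .edge _ _ => True
  | _ => False

def IsParallelNode {V : Type*} : SPTree V → Prop
  | .parallel _ _ => True
  | _ => False

/-- A parallel node has an edge among its (canonical) children. -/
def HasEdgeChild {V : Type*} (t : SPTree V) : Prop :=
  ∃ c ∈ t.parChildren, c.IsEdgeLeaf

/-- The sp-tree `T` contains a jump-edge: an edge whose parent is a parallel node that is
either not the root, or is the root but has at least two series-node siblings of the edge
(equivalently at least three children, since parallel edges are excluded). -/
def HasJumpEdge {V : Type*} (T : SPTree V) : Prop :=
  (∃ P ∈ pars false T, P.HasEdgeChild) ∨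
  (T.IsParallelNode ∧ T.HasEdgeChild ∧ 3 ≤ T.parChildren.length)

end SPTree

section Components

variable {V : Type*}

theorem reachable_induction {W : Type*} {G : SimpleGraph W} (p : W → Prop)
    (hp : ∀ x y, G.Adj x y → p x → p y) {a b : W} (h : G.Reachable a b) (ha : p a) : p b := by
  rw [reachable_iff_reflTransGen] at h
  induction h with
  | refl => exact ha
  | tail _ hxy ih => exact hp _ _ hxy ih

/-- A vertex set closed under adjacency away from `S` shows that `S` is a cutset. -/
theorem isCutset_of_closed [Finite V] {G : SimpleGraph V} {S : Set V} (p : V → Prop)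
    (hp : ∀ x y, G.Adj x y → x ∉ S → y ∉ S → p x → p y) {a b : V}
    (ha : a ∉ S) (hb : b ∉ S) (hpa : p a) (hpb : ¬ p b) : IsCutset G S := by
  have hne : (induce Sᶜ G).connectedComponentMk ⟨a, ha⟩ ≠
      (induce Sᶜ G).connectedComponentMk ⟨b, hb⟩ := by
    intro h
    exact hpb (reachable_induction (fun x => p x.1)
      (fun x y hxy => hp x.1 y.1 hxy x.2 y.2) (ConnectedComponent.exact h) hpa)
  have : Nontrivial (induce Sᶜ G).ConnectedComponent := ⟨_, _, hne⟩
  exact Finite.one_lt_card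

theorem toughness_le {G : SimpleGraph V} {S : Set V} (hS : IsCutset G S) :
    toughness G ≤ (S.ncard : ℝ) / numComp G S := by
  refine csInf_le ⟨0, ?_⟩ ⟨S, hS, rfl⟩
  rintro _ ⟨S', -, rfl⟩
  positivity

theorem toughness_mul_le {G : SimpleGraph V} {S : Set V} (hS : IsCutset G S) :
    toughness G * numComp G S ≤ S.ncard := by
  have h0 : (0 : ℝ) < numComp G S := by
    have : 0 < numComp G S := lt_trans Nat.zero_lt_one hS
    exact_mod_cast this
  exact (le_div_iff₀ h0).1 (toughness_le hS)

theorem le_toughness {G : SimpleGraph V} {t : ℝ} (hG : ∃ S, IsCutset G S)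
    (h : ∀ S, IsCutset G S → t * numComp G S ≤ S.ncard) : t ≤ toughness G := by
  obtain ⟨S₀, hS₀⟩ := hG
  refine le_csInf ⟨_, S₀, hS₀, rfl⟩ ?_
  rintro _ ⟨S, hS, rfl⟩
  have h0 : (0 : ℝ) < numComp G S := by
    have : 0 < numComp G S := lt_trans Nat.zero_lt_one hS
    exact_mod_cast this
  exact (le_div_iff₀ h0).2 (h S hS)

theorem exists_isCutset_of_toughness_pos {G : SimpleGraph V} (h : 0 < toughness G) :
    ∃ S, IsCutset G S := by
  by_contra! hno
  have : toughness G = 0 := by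
    have hempty : {r : ℝ | ∃ S : Set V, IsCutset G S ∧
        r = (S.ncard : ℝ) / (numComp G S : ℝ)} = ∅ := by
      ext r
      simp [hno]
    rw [toughness, hempty, Real.sInf_empty]
  exact h.ne' this

theorem toughness_le_half_of_isCutVertex {G : SimpleGraph V} {x : V} (h : IsCutVertex G x) :
    toughness G ≤ 1 / 2 := by
  refine (toughness_le h).trans ?_
  have h2 : (2 : ℝ) ≤ numComp G {x} := by
    have : 2 ≤ numComp G {x} := h
    exact_mod_cast this
  rw [Set.ncard_singleton, Nat.cast_one]
  exact one_div_le_one_div_of_le (by norm_num) h2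

theorem numComp_anti [Finite V] {G G' : SimpleGraph V} (h : G' ≤ G) (S : Set V) :
    numComp G S ≤ numComp G' S := by
  have hle : induce Sᶜ G' ≤ induce Sᶜ G := fun _ _ hxy => h hxy
  refine Nat.card_le_card_of_surjective
    (ConnectedComponent.map (Hom.ofLE hle)) ?_
  intro C
  induction C using ConnectedComponent.ind with
  | h v => exact ⟨(induce Sᶜ G').connectedComponentMk v, rfl⟩

theorem numComp_le_of_reachable [Finite V] {G G' : SimpleGraph V} {S : Set V}
    (hle : G' ≤ G) (h : ∀ x y : (Sᶜ : Set V), G.Adj x y → (induce Sᶜ G').Reachable x y) :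
    numComp G' S ≤ numComp G S := by
  have hle : induce Sᶜ G' ≤ induce Sᶜ G := fun _ _ hxy => hle hxy
  refine Nat.card_le_card_of_injective (ConnectedComponent.map (Hom.ofLE hle)) ?_
  intro C D
  induction C using ConnectedComponent.ind with
  | h v =>
    induction D using ConnectedComponent.ind with
    | h w =>
      intro hvw
      have hr : (induce Sᶜ G).Reachable v w := ConnectedComponent.exact hvw
      exact ConnectedComponent.sound (reachable_induction (fun x => (induce Sᶜ G').Reachable v x)
        (fun x y hxy hx => hx.trans (h x y hxy)) hr (Reachable.refl v))

/-- Outside `{u, v}`, the component of a vertex of `A` does not change when the deleted vertices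
outside `A` are put back and `u`, `v` are joined. -/
theorem reachable_of_reachable_inter {G G' : SimpleGraph V} {S A : Set V} {u v : V}
    (hadj : ∀ x y, G.Adj x y → x ≠ u → x ≠ v → x ∈ A → G'.Adj x y ∧ y ∈ A)
    {w x : V} (hw : w ∉ S) (hwA : w ∈ A) (hw' : w ∉ S ∩ A) (hx' : x ∉ S ∩ A)
    (hwu : ∀ h : u ∉ S, ¬ (induce Sᶜ G').Reachable ⟨w, hw⟩ ⟨u, h⟩)
    (hwv : ∀ h : v ∉ S, ¬ (induce Sᶜ G').Reachable ⟨w, hw⟩ ⟨v, h⟩)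
    (h : (induce (S ∩ A)ᶜ G).Reachable ⟨w, hw'⟩ ⟨x, hx'⟩) :
    ∃ hx : x ∉ S, (induce Sᶜ G').Reachable ⟨w, hw⟩ ⟨x, hx⟩ := by
  have key := reachable_induction
    (fun y : ((S ∩ A)ᶜ : Set V) => y.1 ∈ A ∧
      ∃ hy : y.1 ∉ S, (induce Sᶜ G').Reachable ⟨w, hw⟩ ⟨y.1, hy⟩) ?_ h
    ⟨hwA, hw, Reachable.refl _⟩
  · exact key.2
  · rintro ⟨y, hy⟩ ⟨z, hz⟩ hyz ⟨hyA, hyS, hr⟩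
    have hyu : y ≠ u := by
      rintro rfl
      exact hwu hyS hr
    have hyv : y ≠ v := by
      rintro rfl
      exact hwv hyS hr
    obtain ⟨hyzG, hzA⟩ := hadj y z hyz hyu hyv hyA
    have hzS : z ∉ S := fun h => hz ⟨h, hzA⟩
    refine ⟨hzA, hzS, hr.trans (Adj.reachable ?_)⟩
    exact hyzG

/-- If `u` and `v` form the boundary between `A` and `B` and `S` separates `u` from `v` in `G'`,
then the components of `G' - S` distribute over those of `G - S ∩ A` and `G - S ∩ B`. -/
theorem numComp_le_add [Finite V] {G G' : SimpleGraph V} {S A B : Set V} {u v : V}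
    (hA : ∀ x y, G.Adj x y → x ≠ u → x ≠ v → x ∈ A → G'.Adj x y ∧ y ∈ A)
    (hB : ∀ x y, G.Adj x y → x ≠ u → x ≠ v → x ∈ B → G'.Adj x y ∧ y ∈ B)
    (hAB : ∀ x, x ∈ A ∨ x ∈ B) (hu : u ∉ S) (hv : v ∉ S)
    (huv : ¬ (induce Sᶜ G').Reachable ⟨u, hu⟩ ⟨v, hv⟩) :
    numComp G' S ≤ numComp G (S ∩ A) + numComp G (S ∩ B) := by
  classical
  set K := induce Sᶜ G' with hK
  let cu := K.connectedComponentMk ⟨u, hu⟩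
  let cv := K.connectedComponentMk ⟨v, hv⟩
  have hcuv : cu ≠ cv := fun h => huv (ConnectedComponent.exact h)
  obtain ⟨rep, hrep⟩ : ∃ rep : K.ConnectedComponent → (Sᶜ : Set V),
      ∀ C, K.connectedComponentMk (rep C) = C :=
    ⟨fun C => C.out, fun C => Quot.out_eq C⟩
  have hinA : ∀ x : (Sᶜ : Set V), x.1 ∉ S ∩ A := fun x h => x.2 h.1
  have hinB : ∀ x : (Sᶜ : Set V), x.1 ∉ S ∩ B := fun x h => x.2 h.1
  let mkA : (Sᶜ : Set V) → (induce (S ∩ A)ᶜ G).ConnectedComponent :=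
    fun x => connectedComponentMk _ ⟨x.1, hinA x⟩
  let mkB : (Sᶜ : Set V) → (induce (S ∩ B)ᶜ G).ConnectedComponent :=
    fun x => connectedComponentMk _ ⟨x.1, hinB x⟩
  have heqA : ∀ C ≠ cu, C ≠ cv → (rep C).1 ∈ A → ∀ x : (Sᶜ : Set V), mkA (rep C) = mkA x →
      C = K.connectedComponentMk x := by
    intro C hCu hCv hCA x hx
    obtain ⟨_, hr⟩ := reachable_of_reachable_inter (S := S) (G' := G') hA (rep C).2 hCA
      (hinA _) (hinA x)
      (fun h hr => hCu ((hrep C).symm.trans (ConnectedComponent.sound hr)))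
      (fun h hr => hCv ((hrep C).symm.trans (ConnectedComponent.sound hr)))
      (ConnectedComponent.exact hx)
    exact (hrep C).symm.trans (ConnectedComponent.sound hr)
  have heqB : ∀ C ≠ cu, C ≠ cv → (rep C).1 ∈ B → ∀ x : (Sᶜ : Set V), mkB (rep C) = mkB x →
      C = K.connectedComponentMk x := by
    intro C hCu hCv hCB x hx
    obtain ⟨_, hr⟩ := reachable_of_reachable_inter (S := S) (G' := G') hB (rep C).2 hCB
      (hinB _) (hinB x)
      (fun h hr => hCu ((hrep C).symm.trans (ConnectedComponent.sound hr)))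
      (fun h hr => hCv ((hrep C).symm.trans (ConnectedComponent.sound hr)))
      (ConnectedComponent.exact hx)
    exact (hrep C).symm.trans (ConnectedComponent.sound hr)
  let f : K.ConnectedComponent →
      (induce (S ∩ A)ᶜ G).ConnectedComponent ⊕ (induce (S ∩ B)ᶜ G).ConnectedComponent :=
    fun C => if C = cu then Sum.inl (mkA ⟨u, hu⟩) else if C = cv then Sum.inr (mkB ⟨v, hv⟩)
      else if (rep C).1 ∈ A then Sum.inl (mkA (rep C)) else Sum.inr (mkB (rep C))
  have hf : Function.Injective f := by
    intro C D hCD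
    have hC := hAB (rep C).1
    have hD := hAB (rep D).1
    have hrC := hrep C
    have hrD := hrep D
    have hAC := heqA C
    have hAD := heqA D
    have hBC := heqB C
    have hBD := heqB D
    simp only [f] at hCD
    split_ifs at hCD <;> grind
  calc numComp G' S = Nat.card K.ConnectedComponent := rfl
    _ ≤ _ := Nat.card_le_card_of_injective f hf
    _ = _ := Nat.card_sum

theorem inter_nonempty_of_separates {G' : SimpleGraph V} {F : Set (Sym2 V)} {S A : Set V} {u v : V}
    (hF : ∀ x y, s(x, y) ∈ F → x ≠ y → G'.Adj x y ∧ y ∈ A)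
    (hreach : (fromEdgeSet F).Reachable u v) (hu : u ∉ S) (hv : v ∉ S)
    (huv : ¬ (induce Sᶜ G').Reachable ⟨u, hu⟩ ⟨v, hv⟩) : (S ∩ A).Nonempty := by
  by_contra hne
  refine huv ?_
  have key := reachable_induction
    (fun y : V => ∃ hy : y ∉ S, (induce Sᶜ G').Reachable ⟨u, hu⟩ ⟨y, hy⟩) ?_ hreach
    ⟨hu, Reachable.refl _⟩
  · exact key.2
  · rintro y z hyz ⟨hyS, hr⟩
    rw [fromEdgeSet_adj] at hyz
    obtain ⟨hyzG, hzA⟩ := hF y z hyz.1 hyz.2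
    have hzS : z ∉ S := fun h => hne ⟨z, h, hzA⟩
    exact ⟨hzS, hr.trans (Adj.reachable (show (induce Sᶜ G').Adj ⟨y, hyS⟩ ⟨z, hzS⟩ from hyzG))⟩

/-- Deleting the edge `uv` does not lower the toughness below `t ≤ 1` if `u` and `v` are joined on
both sides of the separation `(A, B)` with boundary `{u, v}`. -/
theorem le_toughness_deleteEdges [Finite V] {G : SimpleGraph V} {A B : Set V} {u v : V}
    {F F' : Set (Sym2 V)}
    (hpos : 0 < toughness G) (hle : toughness G ≤ 1)
    (hA : ∀ x y, G.Adj x y → x ≠ u → x ≠ v → x ∈ A → y ∈ A)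
    (hB : ∀ x y, G.Adj x y → x ≠ u → x ≠ v → x ∈ B → y ∈ B)
    (hAB : ∀ x, x ∈ A ∨ x ∈ B) (hAB' : ∀ x ∈ A, x ∈ B → x = u ∨ x = v)
    (hF : ∀ x y, s(x, y) ∈ F → x ≠ y → (G.deleteEdges {s(u, v)}).Adj x y ∧ y ∈ A)
    (hF' : ∀ x y, s(x, y) ∈ F' → x ≠ y → (G.deleteEdges {s(u, v)}).Adj x y ∧ y ∈ B)
    (hreach : (fromEdgeSet F).Reachable u v) (hreach' : (fromEdgeSet F').Reachable u v) :
    toughness G ≤ toughness (G.deleteEdges {s(u, v)}) := by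
  set G' := G.deleteEdges {s(u, v)} with hG'
  have hsub : G' ≤ G := deleteEdges_le _
  have hdel : ∀ x y, G.Adj x y → s(x, y) ≠ s(u, v) → G'.Adj x y := by
    intro x y hxy hne
    simp [hG', hxy, hne]
  have hdel' : ∀ x y, G.Adj x y → x ≠ u → x ≠ v → G'.Adj x y := by
    intro x y hxy hu hv
    refine hdel x y hxy ?_
    simp [hu, hv]
  have hside : ∀ S : Set V, S.Nonempty → toughness G * numComp G S ≤ S.ncard := by
    intro S hS
    by_cases hc : IsCutset G S
    · exact toughness_mul_le hc
    · have h1 : (numComp G S : ℝ) ≤ 1 := by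
        have : numComp G S ≤ 1 := not_lt.1 hc
        exact_mod_cast this
      have h2 : (1 : ℝ) ≤ S.ncard := by
        have : 1 ≤ S.ncard := (Set.ncard_pos (Set.toFinite S)).2 hS
        exact_mod_cast this
      have h3 : (0 : ℝ) ≤ numComp G S := Nat.cast_nonneg _
      nlinarith
  refine le_toughness ?_ ?_
  · obtain ⟨S, hS⟩ := exists_isCutset_of_toughness_pos hpos
    exact ⟨S, lt_of_lt_of_le hS (numComp_anti hsub S)⟩
  · intro S hS
    by_cases hsep : ∃ (hu : u ∉ S) (hv : v ∉ S), ¬ (induce Sᶜ G').Reachable ⟨u, hu⟩ ⟨v, hv⟩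
    · obtain ⟨hu, hv, huv⟩ := hsep
      have hcount : numComp G' S ≤ numComp G (S ∩ A) + numComp G (S ∩ B) :=
        numComp_le_add (fun x y hxy hxu hxv hx => ⟨hdel' x y hxy hxu hxv, hA x y hxy hxu hxv hx⟩)
          (fun x y hxy hxu hxv hx => ⟨hdel' x y hxy hxu hxv, hB x y hxy hxu hxv hx⟩) hAB hu hv huv
      have hSA := hside _ (inter_nonempty_of_separates hF hreach hu hv huv)
      have hSB := hside _ (inter_nonempty_of_separates hF' hreach' hu hv huv)
      have hcard : (S ∩ A).ncard + (S ∩ B).ncard ≤ S.ncard := by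
        rw [← Set.ncard_union_eq ?_ (Set.toFinite _) (Set.toFinite _)]
        · exact Set.ncard_le_ncard (by rintro x (h | h) <;> exact h.1) (Set.toFinite S)
        · rw [Set.disjoint_left]
          rintro x ⟨hxS, hxA⟩ ⟨-, hxB⟩
          rcases hAB' x hxA hxB with rfl | rfl
          · exact hu hxS
          · exact hv hxS
      have hcount' : (numComp G' S : ℝ) ≤ numComp G (S ∩ A) + numComp G (S ∩ B) := by
        exact_mod_cast hcount
      have hcard' : ((S ∩ A).ncard : ℝ) + (S ∩ B).ncard ≤ S.ncard := by exact_mod_cast hcard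
      nlinarith
    · push Not at hsep
      have hcount : numComp G' S ≤ numComp G S := by
        refine numComp_le_of_reachable hsub ?_
        rintro ⟨x, hx⟩ ⟨y, hy⟩ hxy
        by_cases he : s(x, y) = s(u, v)
        · rw [Sym2.eq_iff] at he
          rcases he with ⟨rfl, rfl⟩ | ⟨rfl, rfl⟩
          · exact hsep hx hy
          · exact (hsep hy hx).symm
        · exact Adj.reachable (show (induce Sᶜ G').Adj ⟨x, hx⟩ ⟨y, hy⟩ from hdel x y hxy he)
      have hmul := toughness_mul_le (lt_of_lt_of_le hS hcount : IsCutset G S)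
      have hcount' : (numComp G' S : ℝ) ≤ numComp G S := by exact_mod_cast hcount
      nlinarith

end Components

namespace SPTree

variable {V : Type*}

theorem mem_verts_of_mem_edges {T : SPTree V} {e : Sym2 V} (he : e ∈ T.edges) {x : V}
    (hx : x ∈ e) : x ∈ T.verts := by
  induction T with
  | edge u v =>
    rw [show e = s(u, v) from he, Sym2.mem_iff] at hx
    exact hx
  | series l r hl hr => exact he.imp hl hr
  | parallel l r hl hr => exact he.imp hl hr

theorem WF.not_isDiag {T : SPTree V} (h : T.WF) {e : Sym2 V} (he : e ∈ T.edges) :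
    ¬ e.IsDiag := by
  induction T with
  | edge u v =>
    rw [show e = s(u, v) from he]
    exact fun hd => h (Sym2.mk_isDiag_iff.1 hd)
  | series l r hl hr => exact he.elim (hl h.1) (hr h.2.1)
  | parallel l r hl hr => exact he.elim (hl h.1) (hr h.2.1)

theorem WF.reachable {T : SPTree V} (h : T.WF) :
    (fromEdgeSet T.edges).Reachable T.src T.tgt := by
  induction T with
  | edge u v =>
    refine Adj.reachable ?_
    rw [fromEdgeSet_adj]
    exact ⟨rfl, h⟩
  | series l r hl hr =>
    obtain ⟨hlwf, hrwf, heq, -⟩ := h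
    have h1 := (hl hlwf).mono (fromEdgeSet_mono (Set.subset_union_left (t := r.edges)))
    have h2 := (hr hrwf).mono (fromEdgeSet_mono (Set.subset_union_right (s := l.edges)))
    rw [heq] at h1
    exact h1.trans h2
  | parallel l r hl hr =>
    exact (hl h.1).mono (fromEdgeSet_mono (Set.subset_union_left (t := r.edges)))

theorem WF.disjoint_edges_series {l r : SPTree V} (h : (series l r).WF) :
    Disjoint l.edges r.edges := by
  obtain ⟨hlwf, hrwf, heq, hmeet⟩ := h
  rw [Set.disjoint_left]
  intro e hel her
  induction e using Sym2.ind with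
  | h x y =>
    have hx : x ∈ l.verts ∩ r.verts :=
      ⟨mem_verts_of_mem_edges hel (by simp), mem_verts_of_mem_edges her (by simp)⟩
    have hy : y ∈ l.verts ∩ r.verts :=
      ⟨mem_verts_of_mem_edges hel (by simp), mem_verts_of_mem_edges her (by simp)⟩
    rw [hmeet] at hx hy
    refine hlwf.not_isDiag hel ?_
    rw [Sym2.mk_isDiag_iff]
    exact hx.trans hy.symm

theorem WF.of_mem_parChildren {T c : SPTree V} (h : T.WF) (hc : c ∈ T.parChildren) :
    c.src = T.src ∧ c.tgt = T.tgt ∧ c.edges ⊆ T.edges := by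
  induction T with
  | edge u v =>
    obtain rfl : c = edge u v := by simpa [parChildren] using hc
    exact ⟨rfl, rfl, subset_rfl⟩
  | series l r hl hr =>
    obtain rfl : c = series l r := by simpa [parChildren] using hc
    exact ⟨rfl, rfl, subset_rfl⟩
  | parallel l r hl hr =>
    obtain ⟨hlwf, hrwf, hs, ht, -⟩ := h
    rcases List.mem_append.1 hc with hc | hc
    · obtain ⟨h1, h2, h3⟩ := hl hlwf hc
      exact ⟨h1, h2, h3.trans Set.subset_union_left⟩
    · obtain ⟨h1, h2, h3⟩ := hr hrwf hc
      exact ⟨h1.trans hs.symm, h2.trans ht.symm, h3.trans Set.subset_union_right⟩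

theorem IsEdgeLeaf.eq_edge {c : SPTree V} (hc : c.IsEdgeLeaf) : c = edge c.src c.tgt := by
  cases c with
  | edge u v => rfl
  | series l r => exact hc.elim
  | parallel l r => exact hc.elim

theorem pars_false_subset (T : SPTree V) : pars false T ⊆ pars true T := by
  cases T with
  | edge u v => exact fun _ h => h
  | series l r => exact fun _ h => h
  | parallel l r =>
    intro P hP
    simp only [pars] at hP ⊢
    simp_all

theorem one_le_length_parChildren (T : SPTree V) : 1 ≤ T.parChildren.length := by
  induction T with
  | edge u v => simp [parChildren]
  | series l r => simp [parChildren]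
  | parallel l r hl hr =>
    simp only [parChildren, List.length_append]
    omega

/-- The edge set `H` is an outside of the sp-tree `T`: it meets `T` only in the terminals. -/
structure IsContext (T : SPTree V) (H : Set (Sym2 V)) : Prop where
  wf : T.WF
  eq_terminal : ∀ e ∈ H, ∀ x ∈ e, x ∈ T.verts → x = T.src ∨ x = T.tgt
  disjoint : Disjoint T.edges H

theorem isContext_empty {T : SPTree V} (h : T.WF) : T.IsContext ∅ :=
  ⟨h, fun _ he => he.elim, Set.disjoint_empty _⟩

theorem IsContext.series_left {l r : SPTree V} {H : Set (Sym2 V)}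
    (h : (series l r).IsContext H) : l.IsContext (r.edges ∪ H) := by
  obtain ⟨hwf, hterm, hdisj⟩ := h
  have hd := hwf.disjoint_edges_series
  obtain ⟨hl, hr, heq, hmeet⟩ := hwf
  have hcommon : ∀ x ∈ l.verts, x ∈ r.verts → x = l.tgt := by
    intro x hxl hxr
    have : x ∈ l.verts ∩ r.verts := ⟨hxl, hxr⟩
    rwa [hmeet] at this
  refine ⟨hl, ?_, ?_⟩
  · rintro e (he | he) x hx hxl
    · exact Or.inr (hcommon x hxl (mem_verts_of_mem_edges he hx))
    · rcases hterm e he x hx (Or.inl hxl) with h | h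
      · exact Or.inl h
      · refine Or.inr (hcommon x hxl ?_)
        rw [show x = r.tgt from h]
        exact r.tgt_mem_verts
  · exact Set.disjoint_union_right.2 ⟨hd, (Set.disjoint_union_left.1 hdisj).1⟩

theorem IsContext.series_right {l r : SPTree V} {H : Set (Sym2 V)}
    (h : (series l r).IsContext H) : r.IsContext (l.edges ∪ H) := by
  obtain ⟨hwf, hterm, hdisj⟩ := h
  have hd := hwf.disjoint_edges_series
  obtain ⟨hl, hr, heq, hmeet⟩ := hwf
  have hcommon : ∀ x ∈ l.verts, x ∈ r.verts → x = r.src := by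
    intro x hxl hxr
    have : x ∈ l.verts ∩ r.verts := ⟨hxl, hxr⟩
    rw [hmeet] at this
    exact Eq.trans this heq
  refine ⟨hr, ?_, ?_⟩
  · rintro e (he | he) x hx hxr
    · exact Or.inl (hcommon x (mem_verts_of_mem_edges he hx) hxr)
    · rcases hterm e he x hx (Or.inr hxr) with h | h
      · refine Or.inl (hcommon x ?_ hxr)
        rw [show x = l.src from h]
        exact l.src_mem_verts
      · exact Or.inr h
  · exact Set.disjoint_union_right.2 ⟨hd.symm, (Set.disjoint_union_left.1 hdisj).2⟩

theorem IsContext.parallel_left {l r : SPTree V} {H : Set (Sym2 V)}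
    (h : (parallel l r).IsContext H) : l.IsContext (r.edges ∪ H) := by
  obtain ⟨⟨hl, hr, hs, ht, hmeet, hd⟩, hterm, hdisj⟩ := h
  refine ⟨hl, ?_, ?_⟩
  · rintro e (he | he) x hx hxl
    · have : x ∈ l.verts ∩ r.verts := ⟨hxl, mem_verts_of_mem_edges he hx⟩
      rwa [hmeet] at this
    · exact hterm e he x hx (Or.inl hxl)
  · exact Set.disjoint_union_right.2 ⟨hd, (Set.disjoint_union_left.1 hdisj).1⟩

theorem WF.parallel_comm {l r : SPTree V} (h : (parallel l r).WF) : (parallel r l).WF := by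
  obtain ⟨hl, hr, hs, ht, hmeet, hd⟩ := h
  refine ⟨hr, hl, hs.symm, ht.symm, ?_, hd.symm⟩
  rw [Set.inter_comm, hmeet, hs, ht]

theorem IsContext.parallel_comm {l r : SPTree V} {H : Set (Sym2 V)}
    (h : (parallel l r).IsContext H) : (parallel r l).IsContext H := by
  obtain ⟨hwf, hterm, hdisj⟩ := h
  refine ⟨hwf.parallel_comm, ?_, ?_⟩
  · intro e he x hx hxv
    have := hterm e he x hx (Or.symm hxv)
    obtain ⟨-, -, hs, ht, -⟩ := hwf
    change x = r.src ∨ x = r.tgt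
    rw [← hs, ← ht]
    exact this
  · rw [edges, Set.union_comm]
    exact hdisj

theorem IsContext.parallel_right {l r : SPTree V} {H : Set (Sym2 V)}
    (h : (parallel l r).IsContext H) : r.IsContext (l.edges ∪ H) :=
  h.parallel_comm.parallel_left

/-- The parallel nodes of `T` inherit a context joining their terminals. -/
theorem IsContext.of_mem_pars {T : SPTree V} {H : Set (Sym2 V)} (h : T.IsContext H)
    (hH : (fromEdgeSet H).Reachable T.src T.tgt) {P : SPTree V} (hP : P ∈ pars true T) :
    ∃ H', P.IsContext H' ∧ (fromEdgeSet H').Reachable P.src P.tgt ∧ P.IsParallelNode ∧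
      P.edges ∪ H' = T.edges ∪ H := by
  induction T generalizing H with
  | edge u v => simp [pars] at hP
  | series l r hl hr =>
    have hwf := h.wf
    have hright : ∀ K : Set (Sym2 V), (fromEdgeSet (K ∪ H)).Reachable l.src r.tgt := fun K =>
      hH.mono (fromEdgeSet_mono Set.subset_union_right)
    have heq : l.tgt = r.src := hwf.2.2.1
    rcases List.mem_append.1 hP with hP | hP
    · have hrr := hwf.2.1.reachable.mono (fromEdgeSet_mono (Set.subset_union_left (t := H)))
      rw [← heq] at hrr
      obtain ⟨H', h1, h2, h3, h4⟩ := hl h.series_left ((hright _).trans hrr.symm) hP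
      exact ⟨H', h1, h2, h3, by rw [h4, edges, Set.union_assoc]⟩
    · have hll := hwf.1.reachable.mono (fromEdgeSet_mono (Set.subset_union_left (t := H)))
      rw [heq] at hll
      obtain ⟨H', h1, h2, h3, h4⟩ := hr h.series_right (hll.symm.trans (hright _)) hP
      exact ⟨H', h1, h2, h3, by
        rw [h4, edges, ← Set.union_assoc, Set.union_comm r.edges]⟩
  | parallel l r hl hr =>
    have hwf := h.wf
    simp only [pars, if_true, List.mem_append, List.mem_singleton] at hP
    rcases hP with (rfl | hP) | hP
    · exact ⟨H, h, hH, trivial, rfl⟩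
    · have hrr := hwf.2.1.reachable.mono (fromEdgeSet_mono (Set.subset_union_left (t := H)))
      rw [← hwf.2.2.1, ← hwf.2.2.2.1] at hrr
      obtain ⟨H', h1, h2, h3, h4⟩ := hl h.parallel_left hrr (pars_false_subset _ hP)
      exact ⟨H', h1, h2, h3, by rw [h4, edges, Set.union_assoc]⟩
    · have hll := hwf.1.reachable.mono (fromEdgeSet_mono (Set.subset_union_left (t := H)))
      rw [hwf.2.2.1, hwf.2.2.2.1] at hll
      obtain ⟨H', h1, h2, h3, h4⟩ := hr h.parallel_right hll (pars_false_subset _ hP)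
      exact ⟨H', h1, h2, h3, by
        rw [h4, edges, ← Set.union_assoc, Set.union_comm r.edges]⟩

/-- An edge child of a parallel node runs between the terminals, which stay joined without it. -/
theorem WF.reachable_diff_of_hasEdgeChild {P : SPTree V} (h : P.WF) (hP : P.IsParallelNode)
    (he : P.HasEdgeChild) : s(P.src, P.tgt) ∈ P.edges ∧
      (fromEdgeSet (P.edges \ {s(P.src, P.tgt)})).Reachable P.src P.tgt := by
  obtain ⟨c, hc, hleaf⟩ := he
  have hch := h.of_mem_parChildren hc
  have hce : s(c.src, c.tgt) ∈ c.edges := by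
    rw [hleaf.eq_edge]
    rfl
  cases P with
  | edge u v => exact hP.elim
  | series l r => exact hP.elim
  | parallel l r =>
    have hmem := hch.2.2 hce
    rw [hch.1, hch.2.1] at hmem hce
    refine ⟨hmem, ?_⟩
    obtain ⟨hl, hr, hs, ht, -, hd⟩ := h
    rcases List.mem_append.1 hc with hc | hc
    · have hel := (hl.of_mem_parChildren hc).2.2 hce
      have hr' := hr.reachable
      rw [← hs, ← ht] at hr'
      refine hr'.mono (fromEdgeSet_mono fun f hf => ⟨Or.inr hf, ?_⟩)
      rintro rfl
      exact Set.disjoint_left.1 hd hel hf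
    · have her := (hr.of_mem_parChildren hc).2.2 hce
      refine hl.reachable.mono (fromEdgeSet_mono fun f hf => ⟨Or.inl hf, ?_⟩)
      rintro rfl
      exact Set.disjoint_left.1 hd hf her

theorem IsContext.le_toughness_deleteEdges [Finite V] {P : SPTree V} {H : Set (Sym2 V)}
    (h : P.IsContext H) (hH : (fromEdgeSet H).Reachable P.src P.tgt) (hP : P.IsParallelNode)
    (he : P.HasEdgeChild) {G : SimpleGraph V} (hG : G = fromEdgeSet (P.edges ∪ H))
    (hpos : 0 < toughness G) (hle : toughness G ≤ 1) :
    ∃ e ∈ G.edgeSet, toughness G ≤ toughness (G.deleteEdges {e}) := by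
  obtain ⟨hmem, hreach⟩ := h.wf.reachable_diff_of_hasEdgeChild hP he
  have hadj : ∀ x y, G.Adj x y ↔ (s(x, y) ∈ P.edges ∨ s(x, y) ∈ H) ∧ x ≠ y := by
    intro x y
    rw [hG, fromEdgeSet_adj]
    rfl
  refine ⟨s(P.src, P.tgt), ?_, ?_⟩
  · rw [mem_edgeSet, hadj]
    exact ⟨Or.inl hmem, h.wf.src_ne_tgt⟩
  · have hHmem : ∀ x y, s(x, y) ∈ H → y ∈ P.verts → y = P.src ∨ y = P.tgt :=
      fun x y hxy => h.eq_terminal _ hxy y (by simp)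
    have hHmem' : ∀ x y, s(x, y) ∈ H → x ∈ P.verts → x = P.src ∨ x = P.tgt :=
      fun x y hxy => h.eq_terminal _ hxy x (by simp)
    have hPl : ∀ x y, s(x, y) ∈ P.edges → x ∈ P.verts :=
      fun x y hxy => mem_verts_of_mem_edges hxy (by simp)
    have hPr : ∀ x y, s(x, y) ∈ P.edges → y ∈ P.verts :=
      fun x y hxy => mem_verts_of_mem_edges hxy (by simp)
    refine _root_.le_toughness_deleteEdges (A := P.verts)
      (B := {x | x ∈ P.verts → x = P.src ∨ x = P.tgt})
      (F := P.edges \ {s(P.src, P.tgt)}) (F' := H) hpos hle ?_ ?_ ?_ ?_ ?_ ?_ hreach hH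
    · intro x y hxy hxs hxt hx
      rcases ((hadj x y).1 hxy).1 with hxy | hxy
      · exact hPr x y hxy
      · rcases hHmem' x y hxy hx with h | h
        · exact (hxs h).elim
        · exact (hxt h).elim
    · intro x y hxy hxs hxt hx
      rcases ((hadj x y).1 hxy).1 with hxy | hxy
      · rcases hx (hPl x y hxy) with h | h
        · exact (hxs h).elim
        · exact (hxt h).elim
      · exact hHmem x y hxy
    · intro x
      by_cases hx : x ∈ P.verts
      · exact Or.inl hx
      · exact Or.inr fun h => (hx h).elim
    · exact fun x hx hx' => hx' hx
    · intro x y hxy hne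
      refine ⟨?_, hPr x y hxy.1⟩
      rw [deleteEdges_adj, hadj]
      exact ⟨⟨Or.inl hxy.1, hne⟩, hxy.2⟩
    · intro x y hxy hne
      refine ⟨?_, hHmem x y hxy⟩
      rw [deleteEdges_adj, hadj]
      refine ⟨⟨Or.inr hxy, hne⟩, fun heq => ?_⟩
      rw [show s(x, y) = s(P.src, P.tgt) from heq] at hxy
      exact Set.disjoint_left.1 h.disjoint hmem hxy

theorem parallel_cases_of_three_le {a b : SPTree V}
    (h : 3 ≤ (parallel a b).parChildren.length) {c : SPTree V} (hc : c ∈ a.parChildren)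
    (hleaf : c.IsEdgeLeaf) : a.IsParallelNode ∨ (a.IsEdgeLeaf ∧ ∃ b₁ b₂, b = parallel b₁ b₂) := by
  cases a with
  | parallel _ _ => exact Or.inl trivial
  | series l r =>
    obtain rfl : c = series l r := by simpa [parChildren] using hc
    exact hleaf.elim
  | edge u v =>
    refine Or.inr ⟨trivial, ?_⟩
    cases b with
    | parallel b₁ b₂ => exact ⟨b₁, b₂, rfl⟩
    | edge _ _ => simp [parChildren] at h
    | series _ _ => simp [parChildren] at h

/-- At a root with at least three children, an edge child belongs to a parallel node with a
context joining its terminals. -/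
theorem WF.exists_isContext_of_three_le {a b : SPTree V} (hwf : (parallel a b).WF)
    (h : 3 ≤ (parallel a b).parChildren.length) {c : SPTree V} (hc : c ∈ a.parChildren)
    (hleaf : c.IsEdgeLeaf) :
    ∃ (P : SPTree V) (H : Set (Sym2 V)), P.IsContext H ∧ (fromEdgeSet H).Reachable P.src P.tgt ∧ P.IsParallelNode ∧
      P.HasEdgeChild ∧ P.edges ∪ H = a.edges ∪ b.edges := by
  have hctx := (isContext_empty hwf).parallel_left
  rw [Set.union_empty] at hctx
  rcases parallel_cases_of_three_le h hc hleaf with ha | ⟨ha, b₁, b₂, rfl⟩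
  · have hb := hwf.2.1.reachable
    rw [← hwf.2.2.1, ← hwf.2.2.2.1] at hb
    exact ⟨a, b.edges, hctx, hb, ha, ⟨c, hc, hleaf⟩, rfl⟩
  · obtain ⟨haw, ⟨hb₁, hb₂, hs', ht', hmeet', hdb⟩, hs, ht, hmeet, hd⟩ := hwf
    simp only [src, tgt] at hs ht
    have hd1 : Disjoint a.edges b₁.edges := (Set.disjoint_union_right.1 hd).1
    have hd2 : Disjoint a.edges b₂.edges := (Set.disjoint_union_right.1 hd).2
    have hcom : ∀ x ∈ a.verts, x ∈ b₁.verts ∪ b₂.verts → x = a.src ∨ x = a.tgt := by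
      intro x hxa hxb
      have : x ∈ a.verts ∩ (parallel b₁ b₂).verts := ⟨hxa, hxb⟩
      rwa [hmeet] at this
    have hwf1 : (parallel a b₁).WF := by
      refine ⟨haw, hb₁, hs, ht, ?_, hd1⟩
      ext x
      constructor
      · rintro ⟨hxa, hxb⟩
        exact hcom x hxa (Or.inl hxb)
      · rintro (rfl | rfl)
        · exact ⟨a.src_mem_verts, by rw [hs]; exact b₁.src_mem_verts⟩
        · exact ⟨a.tgt_mem_verts, by rw [ht]; exact b₁.tgt_mem_verts⟩
    have hreach := hb₂.reachable
    rw [← hs', ← ht', ← hs, ← ht] at hreach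
    refine ⟨parallel a b₁, b₂.edges, ⟨hwf1, ?_, ?_⟩, hreach, trivial,
      ⟨c, List.mem_append.2 (Or.inl hc), hleaf⟩, Set.union_assoc _ _ _⟩
    · intro e he x hx hxv
      have hx₂ := mem_verts_of_mem_edges he hx
      rcases hxv with hxa | hxb
      · exact hcom x hxa (Or.inr hx₂)
      · have : x ∈ b₁.verts ∩ b₂.verts := ⟨hxb, hx₂⟩
        rw [hmeet', ← hs, ← ht] at this
        exact this
    · exact Set.disjoint_union_left.2 ⟨hd2, hdb⟩

/-- A series composition has a cut vertex. -/
theorem WF.isCutVertex_series [Finite V] {l r : SPTree V} (h : (series l r).WF)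
    {G : SimpleGraph V} (hG : ∀ x y, G.Adj x y → s(x, y) ∈ (series l r).edges) :
    IsCutVertex G l.tgt := by
  obtain ⟨hl, hr, heq, hmeet⟩ := h
  have hcommon : ∀ x ∈ l.verts, x ∈ r.verts → x = l.tgt := by
    intro x hxl hxr
    have : x ∈ l.verts ∩ r.verts := ⟨hxl, hxr⟩
    rwa [hmeet] at this
  refine isCutset_of_closed (· ∈ l.verts) ?_ (a := l.src) (b := r.tgt) hl.src_ne_tgt ?_
    l.src_mem_verts ?_
  · intro x y hxy hx hy hxl
    rcases hG x y hxy with he | he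
    · exact mem_verts_of_mem_edges he (by simp)
    · exact (hx (hcommon x hxl (mem_verts_of_mem_edges he (by simp)))).elim
  · intro h
    exact hr.src_ne_tgt (heq.symm.trans (Eq.symm h))
  · intro h
    exact hr.src_ne_tgt (heq.symm.trans (hcommon _ h r.tgt_mem_verts).symm)

theorem IsContext.isCutVertex_edge_series [Finite V] {u v : V} {r : SPTree V} {H : Set (Sym2 V)}
    (h : (series (edge u v) r).IsContext H) {G : SimpleGraph V}
    (hG : G = fromEdgeSet ((series (edge u v) r).edges ∪ H)) :
    IsCutVertex (G.deleteEdges {s(u, v)}) r.tgt := by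
  obtain ⟨⟨huv, hr, heq, hmeet⟩, hterm, -⟩ := h
  have hur : u ∉ r.verts := by
    intro hu
    have : u ∈ (edge u v).verts ∩ r.verts := ⟨Or.inl rfl, hu⟩
    rw [hmeet] at this
    exact huv this
  refine isCutset_of_closed (· ∈ r.verts) ?_ (a := r.src) (b := u) hr.src_ne_tgt ?_
    r.src_mem_verts hur
  · intro x y hxy hx hy hxr
    rw [hG, deleteEdges_adj, fromEdgeSet_adj] at hxy
    obtain ⟨⟨(he | he) | he, -⟩, hne⟩ := hxy
    · exact (hne he).elim
    · exact mem_verts_of_mem_edges he (by simp)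
    · rcases hterm _ he x (by simp) (Or.inr hxr) with h | h
      · rw [show x = u from h] at hxr
        exact (hur hxr).elim
      · exact (hx h).elim
  · intro h
    rw [show u = r.tgt from h] at hur
    exact hur r.tgt_mem_verts

theorem IsContext.isCutVertex_series_edge [Finite V] {u v : V} {l : SPTree V} {H : Set (Sym2 V)}
    (h : (series l (edge u v)).IsContext H) {G : SimpleGraph V}
    (hG : G = fromEdgeSet ((series l (edge u v)).edges ∪ H)) :
    IsCutVertex (G.deleteEdges {s(u, v)}) l.src := by
  obtain ⟨⟨hl, huv, heq, hmeet⟩, hterm, -⟩ := h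
  have hvl : v ∉ l.verts := by
    intro hv
    have : v ∈ l.verts ∩ (edge u v).verts := ⟨hv, Or.inr rfl⟩
    rw [hmeet] at this
    exact huv (Eq.trans this heq).symm
  refine isCutset_of_closed (· ∈ l.verts) ?_ (a := l.tgt) (b := v) hl.src_ne_tgt.symm ?_
    l.tgt_mem_verts hvl
  · intro x y hxy hx hy hxl
    rw [hG, deleteEdges_adj, fromEdgeSet_adj] at hxy
    obtain ⟨⟨(he | he) | he, -⟩, hne⟩ := hxy
    · exact mem_verts_of_mem_edges he (by simp)
    · exact (hne he).elim
    · rcases hterm _ he x (by simp) (Or.inl hxl) with h | h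
      · exact (hx h).elim
      · rw [show x = v from h] at hxl
        exact (hvl hxl).elim
  · intro h
    rw [show v = l.src from h] at hvl
    exact hvl l.src_mem_verts

/-- An edge that is the whole tree, or an edge child of a parallel root cluster. -/
def IsTopEdge (T : SPTree V) (e : Sym2 V) : Prop := ∃ c ∈ T.parChildren, c.IsEdgeLeaf ∧ e ∈ c.edges

theorem IsTopEdge.cases {T : SPTree V} {e : Sym2 V} (h : T.IsTopEdge e) :
    (∃ u v, T = edge u v ∧ e = s(u, v)) ∨ (T ∈ pars true T ∧ T.HasEdgeChild) := by
  obtain ⟨c, hc, hleaf, hec⟩ := h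
  cases T with
  | edge u v =>
    obtain rfl : c = edge u v := by simpa [parChildren] using hc
    exact Or.inl ⟨u, v, rfl, hec⟩
  | series l r =>
    obtain rfl : c = series l r := by simpa [parChildren] using hc
    exact hleaf.elim
  | parallel l r => exact Or.inr ⟨by simp [pars], c, hc, hleaf⟩

/-- Deleting an edge with a series parent creates a cut vertex. -/
theorem IsContext.edge_trichotomy [Finite V] {T : SPTree V} {H : Set (Sym2 V)}
    (h : T.IsContext H) {G : SimpleGraph V} (hG : G = fromEdgeSet (T.edges ∪ H)) {e : Sym2 V}
    (he : e ∈ T.edges) :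
    T.IsTopEdge e ∨ (∃ P ∈ pars false T, P.HasEdgeChild) ∨
      ∃ x, IsCutVertex (G.deleteEdges {e}) x := by
  induction T generalizing H with
  | edge u v => exact Or.inl ⟨edge u v, by simp [parChildren], trivial, he⟩
  | series l r hl hr =>
    have hassoc : l.edges ∪ (r.edges ∪ H) = (series l r).edges ∪ H := (Set.union_assoc _ _ _).symm
    have hassoc' : r.edges ∪ (l.edges ∪ H) = (series l r).edges ∪ H := by
      rw [edges, ← Set.union_assoc, Set.union_comm r.edges]
    refine Or.inr ?_
    rcases he with he | he
    · rcases hl h.series_left (by rw [hG, hassoc]) he with htop | ⟨P, hP, hPe⟩ | hcut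
      · rcases htop.cases with ⟨u, v, rfl, rfl⟩ | ⟨hmem, hchild⟩
        · exact Or.inr ⟨_, h.isCutVertex_edge_series hG⟩
        · exact Or.inl ⟨l, List.mem_append.2 (Or.inl hmem), hchild⟩
      · exact Or.inl ⟨P, List.mem_append.2 (Or.inl (pars_false_subset _ hP)), hPe⟩
      · exact Or.inr hcut
    · rcases hr h.series_right (by rw [hG, hassoc']) he with htop | ⟨P, hP, hPe⟩ | hcut
      · rcases htop.cases with ⟨u, v, rfl, rfl⟩ | ⟨hmem, hchild⟩
        · exact Or.inr ⟨_, h.isCutVertex_series_edge hG⟩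
        · exact Or.inl ⟨r, List.mem_append.2 (Or.inr hmem), hchild⟩
      · exact Or.inl ⟨P, List.mem_append.2 (Or.inr (pars_false_subset _ hP)), hPe⟩
      · exact Or.inr hcut
  | parallel l r hl hr =>
    have hassoc : l.edges ∪ (r.edges ∪ H) = (parallel l r).edges ∪ H :=
      (Set.union_assoc _ _ _).symm
    have hassoc' : r.edges ∪ (l.edges ∪ H) = (parallel l r).edges ∪ H := by
      rw [edges, ← Set.union_assoc, Set.union_comm r.edges]
    rcases he with he | he
    · rcases hl h.parallel_left (by rw [hG, hassoc]) he with ⟨c, hc, hce⟩ | ⟨P, hP, hPe⟩ | hcut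
      · exact Or.inl ⟨c, List.mem_append.2 (Or.inl hc), hce⟩
      · exact Or.inr (Or.inl ⟨P, by simp [pars, hP], hPe⟩)
      · exact Or.inr (Or.inr hcut)
    · rcases hr h.parallel_right (by rw [hG, hassoc']) he with ⟨c, hc, hce⟩ | ⟨P, hP, hPe⟩ | hcut
      · exact Or.inl ⟨c, List.mem_append.2 (Or.inr hc), hce⟩
      · exact Or.inr (Or.inl ⟨P, by simp [pars, hP], hPe⟩)
      · exact Or.inr (Or.inr hcut)

/-- A leap-edge next to a series node: deleting it leaves a cut vertex. -/
theorem WF.isCutVertex_of_leap [Finite V] {a b : SPTree V} (hwf : (parallel a b).WF)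
    (hlen : (parallel a b).parChildren.length < 3) {c : SPTree V} (hc : c ∈ a.parChildren)
    (hleaf : c.IsEdgeLeaf) {e : Sym2 V} (he : e ∈ c.edges) {G : SimpleGraph V}
    (hG : G = fromEdgeSet (a.edges ∪ b.edges)) : ∃ x, IsCutVertex (G.deleteEdges {e}) x := by
  simp only [parChildren, List.length_append] at hlen
  have ha := a.one_le_length_parChildren
  have hb := b.one_le_length_parChildren
  obtain ⟨haw, hbw, hs, ht, -, hd⟩ := hwf
  cases a with
  | parallel a₁ a₂ =>
    have h₁ := a₁.one_le_length_parChildren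
    have h₂ := a₂.one_le_length_parChildren
    simp only [parChildren, List.length_append] at hlen
    omega
  | series a₁ a₂ =>
    obtain rfl : c = series a₁ a₂ := by simpa [parChildren] using hc
    exact hleaf.elim
  | edge u v =>
    obtain rfl : c = edge u v := by simpa [parChildren] using hc
    cases b with
    | parallel b₁ b₂ =>
      have h₁ := b₁.one_le_length_parChildren
      have h₂ := b₂.one_le_length_parChildren
      simp only [parChildren, List.length_append, List.length_singleton] at hlen
      omega
    | edge u' v' =>
      simp only [src, tgt] at hs ht
      subst hs ht
      exact (Set.disjoint_left.1 hd he he).elim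
    | series b₁ b₂ =>
      refine ⟨_, hbw.isCutVertex_series ?_⟩
      intro x y hxy
      rw [hG, deleteEdges_adj, fromEdgeSet_adj] at hxy
      obtain ⟨⟨hxy | hxy, -⟩, hne⟩ := hxy
      · exact (hne (Eq.trans hxy (Eq.symm he))).elim
      · exact hxy

end SPTree

/-- A single edge has no cutset, so its toughness takes the junk value of an empty infimum. -/
theorem toughness_fromEdgeSet_edge_nonpos {V : Type*} [Finite V] {u v : V}
    (huniv : (SPTree.edge u v).verts = Set.univ) :
    toughness (fromEdgeSet (SPTree.edge u v).edges) ≤ 0 := by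
  by_contra! hpos
  obtain ⟨S, hS⟩ := exists_isCutset_of_toughness_pos hpos
  have : Nontrivial (induce Sᶜ (fromEdgeSet (SPTree.edge u v).edges)).ConnectedComponent :=
    Finite.one_lt_card_iff_nontrivial.1 hS
  obtain ⟨C, D, hCD⟩ := this
  induction C using ConnectedComponent.ind with
  | h x =>
    induction D using ConnectedComponent.ind with
    | h y =>
      have hxy : x.1 ≠ y.1 := fun h => hCD (by rw [Subtype.ext h])
      refine hCD (ConnectedComponent.sound (Adj.reachable ?_))
      change (fromEdgeSet (SPTree.edge u v).edges).Adj x.1 y.1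
      rw [fromEdgeSet_adj]
      refine ⟨?_, hxy⟩
      have hx : x.1 ∈ (SPTree.edge u v).verts := huniv ▸ Set.mem_univ _
      have hy : y.1 ∈ (SPTree.edge u v).verts := huniv ▸ Set.mem_univ _
      change s(x.1, y.1) = s(u, v)
      rw [Sym2.eq_iff]
      rcases hx with hx | hx <;> rcases hy with hy | hy
      · exact (hxy (hx.trans hy.symm)).elim
      · exact Or.inl ⟨hx, hy⟩
      · exact Or.inr ⟨hx, hy⟩
      · exact (hxy (hx.trans hy.symm)).elim

/-- Deleting a jump-edge does not decrease the toughness. -/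
theorem RepresentsSP.exists_toughness_le_of_hasJumpEdge {V : Type*} [Finite V]
    {G : SimpleGraph V} {T : SPTree V} (hrep : RepresentsSP G T) (h1 : 1 / 2 < toughness G)
    (h2 : toughness G ≤ 1) (hjump : T.HasJumpEdge) :
    ∃ e ∈ G.edgeSet, toughness G ≤ toughness (G.deleteEdges {e}) := by
  obtain ⟨hwf, -, hG⟩ := hrep
  have hpos : 0 < toughness G := by linarith
  cases T with
  | edge u v =>
    rcases hjump with ⟨P, hP, -⟩ | ⟨hpar, -⟩
    · simp [SPTree.pars] at hP
    · exact hpar.elim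
  | series l r =>
    have hcut : IsCutVertex G l.tgt := by
      refine hwf.isCutVertex_series fun x y hxy => ?_
      rw [hG, fromEdgeSet_adj] at hxy
      exact hxy.1
    linarith [toughness_le_half_of_isCutVertex hcut]
  | parallel l r =>
    rcases hjump with ⟨P, hP, hchild⟩ | ⟨-, ⟨c, hc, hleaf⟩, hlen⟩
    · have hctx := SPTree.isContext_empty hwf
      have hcl := hctx.parallel_left
      have hcr := hctx.parallel_right
      rw [Set.union_empty] at hcl hcr
      obtain ⟨hl, hr, hs, ht, -, -⟩ := hwf
      simp only [SPTree.pars, List.mem_append] at hP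
      obtain ⟨H', k1, k2, k3, k4⟩ : ∃ H', P.IsContext H' ∧
          (fromEdgeSet H').Reachable P.src P.tgt ∧ P.IsParallelNode ∧
          P.edges ∪ H' = l.edges ∪ r.edges := by
        rcases hP with (hP | hP) | hP
        · simp at hP
        · exact hcl.of_mem_pars (by rw [hs, ht]; exact hr.reachable)
            (SPTree.pars_false_subset _ hP)
        · rw [Set.union_comm l.edges]
          exact hcr.of_mem_pars (by rw [← hs, ← ht]; exact hl.reachable)
            (SPTree.pars_false_subset _ hP)
      exact k1.le_toughness_deleteEdges k2 k3 hchild (by rw [hG, k4]; rfl) hpos h2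
    · rcases List.mem_append.1 hc with hc | hc
      · obtain ⟨P, H, k1, k2, k3, k4, k5⟩ := hwf.exists_isContext_of_three_le hlen hc hleaf
        exact k1.le_toughness_deleteEdges k2 k3 k4 (by rw [hG, k5]; rfl) hpos h2
      · have hlen' : 3 ≤ (SPTree.parallel r l).parChildren.length := by
          simp only [SPTree.parChildren, List.length_append] at hlen ⊢
          omega
        obtain ⟨P, H, k1, k2, k3, k4, k5⟩ :=
          hwf.parallel_comm.exists_isContext_of_three_le hlen' hc hleaf
        exact k1.le_toughness_deleteEdges k2 k3 k4 (by
          rw [hG, k5, Set.union_comm]; rfl) hpos h2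

/-- Without jump-edges, deleting any edge creates a cut vertex. -/
theorem RepresentsSP.exists_isCutVertex_of_not_hasJumpEdge {V : Type*} [Finite V]
    {G : SimpleGraph V} {T : SPTree V} (hrep : RepresentsSP G T) (hpos : 0 < toughness G)
    (hjump : ¬ T.HasJumpEdge) {e : Sym2 V} (he : e ∈ G.edgeSet) :
    ∃ x, IsCutVertex (G.deleteEdges {e}) x := by
  obtain ⟨hwf, huniv, hG⟩ := hrep
  have heT : e ∈ T.edges := by
    rw [hG, edgeSet_fromEdgeSet] at he
    exact he.1
  rcases (SPTree.isContext_empty hwf).edge_trichotomy (G := G) (by rw [hG, Set.union_empty]) heT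
    with ⟨c, hc, hleaf, hec⟩ | hP | hcut
  · cases T with
    | edge u v =>
      have hle := toughness_fromEdgeSet_edge_nonpos huniv
      rw [← hG] at hle
      exact (hpos.not_ge hle).elim
    | series l r =>
      obtain rfl : c = SPTree.series l r := by simpa [SPTree.parChildren] using hc
      exact hleaf.elim
    | parallel l r =>
      have hlen : (SPTree.parallel l r).parChildren.length < 3 := by
        by_contra! hlen
        exact hjump (Or.inr ⟨trivial, ⟨c, hc, hleaf⟩, hlen⟩)
      rcases List.mem_append.1 hc with hc | hc
      · exact hwf.isCutVertex_of_leap hlen hc hleaf hec hG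
      · have hlen' : (SPTree.parallel r l).parChildren.length < 3 := by
          simp only [SPTree.parChildren, List.length_append] at hlen ⊢
          omega
        exact hwf.parallel_comm.isCutVertex_of_leap hlen' hc hleaf hec (by
          rw [hG, Set.union_comm]; rfl)
  · exact (hjump (Or.inl hP)).elim
  · exact hcut

/-- A series-parallel graph `G` is minimally `t`-tough for `1/2 < t < 1` if and only if
`G` has toughness `t` and its sp-tree contains no jump-edges. -/
theorem minTough_iff_no_jumpEdge {V : Type*} [Fintype V]
    (G : SimpleGraph V) (T : SPTree V) (hrep : RepresentsSP G T)
    (t : ℝ) (h1 : 1 / 2 < t) (h2 : t < 1) :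
    MinTough G t ↔ (toughness G = t ∧ ¬ T.HasJumpEdge) := by
  constructor
  · rintro ⟨rfl, hmin⟩
    refine ⟨rfl, fun hjump => ?_⟩
    obtain ⟨e, he, hle⟩ := hrep.exists_toughness_le_of_hasJumpEdge h1 h2.le hjump
    exact (hmin e he).not_ge hle
  · rintro ⟨rfl, hjump⟩
    refine ⟨rfl, fun e he => ?_⟩
    obtain ⟨x, hx⟩ := hrep.exists_isCutVertex_of_not_hasJumpEdge (by linarith) hjump he
    exact (toughness_le_half_of_isCutVertex hx).trans_lt h1
end

section
/- Let G be the parallel join of a bracelet B_ℓ (a series join of ℓ ≥ 1 copies of R₂) and a single edge joining the two end terminals. Then τ(G) > 1/2. -/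
open SimpleGraph

/-- `IsPathT t n` : the sp-tree `t` is a series join of edges forming a path of length `n`. -/
inductive IsPathT {V : Type*} : SPTree V → ℕ → Prop
  | edge (u v : V) : IsPathT (.edge u v) 1
  | series {l r : SPTree V} {m n : ℕ} : IsPathT l m → IsPathT r n → IsPathT (.series l r) (m + n)

/-- `R₂` : the parallel join of two paths of length 2. -/
def IsR2 {V : Type*} (t : SPTree V) : Prop :=
  ∃ l r : SPTree V, t = .parallel l r ∧ IsPathT l 2 ∧ IsPathT r 2

/-- A bracelet `B_ℓ`: a series join of `ℓ ≥ 1` copies of `R₂`. -/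
inductive IsBracelet {V : Type*} : SPTree V → Prop
  | single {t : SPTree V} : IsR2 t → IsBracelet t
  | cons {t r : SPTree V} : IsR2 t → IsBracelet r → IsBracelet (.series t r)

theorem IsPathT.one_le {V : Type*} {t : SPTree V} {n : ℕ} (h : IsPathT t n) : 1 ≤ n := by
  induction h with
  | edge => exact le_rfl
  | series _ _ h₁ h₂ => omega

theorem IsPathT.eq_edge {V : Type*} {t : SPTree V} (h : IsPathT t 1) :
    ∃ u v, t = .edge u v := by
  generalize hn : 1 = n at h
  cases h with
  | edge u v => exact ⟨u, v, rfl⟩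
  | series h₁ h₂ =>
    have := h₁.one_le
    have := h₂.one_le
    omega

theorem IsPathT.eq_series_edge {V : Type*} {t : SPTree V} (h : IsPathT t 2) :
    ∃ u v z w, t = .series (.edge u v) (.edge z w) := by
  generalize hn : 2 = n at h
  cases h with
  | edge u v => omega
  | @series l r m n h₁ h₂ =>
    have := h₁.one_le
    have := h₂.one_le
    obtain rfl : m = 1 := by omega
    obtain rfl : n = 1 := by omega
    obtain ⟨u, v, rfl⟩ := h₁.eq_edge
    obtain ⟨z, w, rfl⟩ := h₂.eq_edge
    exact ⟨u, v, z, w, rfl⟩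

/-- A well-formed `R₂` is a four-cycle `a x b y` with terminals `a` and `b`. -/
theorem IsR2.exists_fourCycle {V : Type*} {t : SPTree V} (h : IsR2 t) (hWF : t.WF) :
    ∃ a b x y, t.src = a ∧ t.tgt = b ∧ t.verts = {a, b, x, y} ∧
      t.edges = {s(a, x), s(x, b), s(a, y), s(y, b)} ∧
      a ≠ b ∧ a ≠ x ∧ a ≠ y ∧ b ≠ x ∧ b ≠ y ∧ x ≠ y := by
  obtain ⟨l, r, rfl, hl, hr⟩ := h
  obtain ⟨a, x, x', b, rfl⟩ := hl.eq_series_edge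
  obtain ⟨a', y, y', b', rfl⟩ := hr.eq_series_edge
  simp only [SPTree.WF, SPTree.src, SPTree.tgt, SPTree.verts] at hWF
  obtain ⟨⟨hax, hxb, rfl, hl⟩, ⟨hay, hyb, rfl, hr⟩, rfl, rfl, hlr, -⟩ := hWF
  have hab : a ≠ b := by
    rintro rfl
    have : a ∈ ({x} : Set V) := hl ▸ (by simp)
    exact hax this
  have hxy : x ≠ y := by
    rintro rfl
    have : x ∈ ({a, b} : Set V) := hlr ▸ (by simp)
    rcases this with h | h
    · exact hax h.symm
    · exact hxb h
  refine ⟨a, b, x, y, rfl, rfl, ?_, ?_, hab, hax, hay, hxb.symm, hyb.symm, hxy⟩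
  · ext v
    simp only [SPTree.verts, Set.mem_union, Set.mem_insert_iff, Set.mem_singleton_iff]
    tauto
  · ext e
    simp only [SPTree.edges, Set.mem_union, Set.mem_insert_iff, Set.mem_singleton_iff]
    tauto

theorem SPTree.src_mem_verts_s18 {V : Type*} (t : SPTree V) : t.src ∈ t.verts := by
  induction t with
  | edge u v => simp [src, verts]
  | series l r hl hr => exact Or.inl hl
  | parallel l r hl hr => exact Or.inl hl

theorem SPTree.tgt_mem_verts_s18 {V : Type*} (t : SPTree V) : t.tgt ∈ t.verts := by
  induction t with
  | edge u v => simp [tgt, verts]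
  | series l r hl hr => exact Or.inr hr
  | parallel l r hl hr => exact Or.inl hl

theorem SPTree.mem_verts_of_mem_edges_s18 {V : Type*} {t : SPTree V} {e : Sym2 V} {v : V}
    (he : e ∈ t.edges) (hv : v ∈ e) : v ∈ t.verts := by
  induction t with
  | edge u w =>
    obtain rfl : e = s(u, w) := he
    simpa [verts] using hv
  | series l r hl hr => exact he.imp hl hr
  | parallel l r hl hr => exact he.imp hl hr

theorem IsBracelet.exists_nonadjacent {V : Type*} {T : SPTree V} (hbr : IsBracelet T)
    (hWF : T.WF) :
    ∃ x y, x ≠ y ∧ s(x, y) ∉ T.edges ∧ x ≠ T.src ∧ x ≠ T.tgt := by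
  cases hbr with
  | single h =>
    obtain ⟨a, b, x, y, rfl, rfl, -, he, hab, hax, hay, hbx, hby, hxy⟩ := h.exists_fourCycle hWF
    refine ⟨x, y, hxy, ?_, hax.symm, hbx.symm⟩
    simp only [he, Set.mem_insert_iff, Set.mem_singleton_iff, Sym2.eq_iff]
    grind
  | @cons t r h _ =>
    obtain ⟨ht, -, -, hinter⟩ := hWF
    obtain ⟨a, b, x, y, rfl, rfl, hv, he, hab, hax, hay, hbx, hby, hxy⟩ := h.exists_fourCycle ht
    have hxr : x ∉ r.verts := fun hx => by
      have : x ∈ ({t.tgt} : Set V) := hinter ▸ ⟨by simp [hv], hx⟩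
      exact hbx this.symm
    refine ⟨x, y, hxy, ?_, hax.symm, fun hx => hxr (hx ▸ r.tgt_mem_verts_s18)⟩
    rintro (hl | hr)
    · simp only [he, Set.mem_insert_iff, Set.mem_singleton_iff, Sym2.eq_iff] at hl
      grind
    · exact hxr (SPTree.mem_verts_of_mem_edges_s18 hr (Sym2.mem_mk_left x y))

/-- The relation of being joined by a path of `G` that avoids `S`. -/
def ReachableOff {V : Type*} (G : SimpleGraph V) (S : Set V) (u v : V) : Prop :=
  ∃ (hu : u ∈ Sᶜ) (hv : v ∈ Sᶜ), (SimpleGraph.induce Sᶜ G).Reachable ⟨u, hu⟩ ⟨v, hv⟩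

namespace ReachableOff

variable {V : Type*} {G : SimpleGraph V} {S : Set V} {u v w : V}

theorem refl (hu : u ∉ S) : ReachableOff G S u u := ⟨hu, hu, .rfl⟩

theorem symm (h : ReachableOff G S u v) : ReachableOff G S v u :=
  let ⟨hu, hv, h⟩ := h
  ⟨hv, hu, h.symm⟩

theorem trans (h : ReachableOff G S u v) (h' : ReachableOff G S v w) : ReachableOff G S u w :=
  let ⟨hu, _, h⟩ := h
  let ⟨_, hw, h'⟩ := h'
  ⟨hu, hw, h.trans h'⟩

theorem of_adj (h : G.Adj u v) (hu : u ∉ S) (hv : v ∉ S) : ReachableOff G S u v :=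
  ⟨hu, hv, SimpleGraph.Adj.reachable (by simpa using h)⟩

theorem right_notMem (h : ReachableOff G S u v) : v ∉ S := h.2.1

end ReachableOff

theorem numComp_le_card {V : Type*} {G : SimpleGraph V} {S : Set V} (R : Finset V)
    (hR : ∀ v, v ∉ S → ∃ w ∈ R, ReachableOff G S v w) : numComp G S ≤ R.card := by
  have hrep : ∀ C : (SimpleGraph.induce Sᶜ G).ConnectedComponent,
      ∃ w : R, ∃ v : (Sᶜ : Set V), (SimpleGraph.induce Sᶜ G).connectedComponentMk v = C ∧
        ReachableOff G S v w := by
    intro C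
    obtain ⟨v, rfl⟩ := C.exists_rep
    obtain ⟨w, hw, h⟩ := hR v v.2
    exact ⟨⟨w, hw⟩, v, rfl, h⟩
  choose f g hg hf using hrep
  have hinj : Function.Injective f := by
    intro C D hCD
    obtain ⟨_, _, h⟩ := (hf C).trans (hCD ▸ (hf D).symm)
    rw [← hg C, ← hg D]
    exact SimpleGraph.ConnectedComponent.sound h
  simpa [numComp] using Nat.card_le_card_of_injective f hinj

/-- The components of `T - S` not containing a terminal are represented by a set `R` with
`|R| + 2 ≤ 2 |S ∩ V(T)|`, unless `T - S` is connected and contains both terminals. -/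
def HasRepresentatives {V : Type*} (G : SimpleGraph V) (S : Set V) (T : SPTree V) : Prop :=
  ∃ R : Finset V,
    (∀ v ∈ T.verts, v ∉ S →
      ReachableOff G S v T.src ∨ ReachableOff G S v T.tgt ∨ ∃ w ∈ R, ReachableOff G S v w) ∧
    ((R = ∅ ∧ ReachableOff G S T.src T.tgt) ∨ R.card + 2 ≤ 2 * (S ∩ T.verts).ncard)

theorem IsR2.hasRepresentatives {V : Type*} [Finite V] {G : SimpleGraph V} {S : Set V}
    {t : SPTree V} (h : IsR2 t) (hWF : t.WF) (hG : ∀ u v, u ≠ v → s(u, v) ∈ t.edges → G.Adj u v) :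
    HasRepresentatives G S t := by
  classical
  obtain ⟨a, b, x, y, ha, hb, hv, he, hab, hax, hay, hbx, hby, hxy⟩ := h.exists_fourCycle hWF
  have hGax : G.Adj x a := (hG a x hax (by simp [he])).symm
  have hGxb : G.Adj x b := hG x b hbx.symm (by simp [he])
  have hGay : G.Adj y a := (hG a y hay (by simp [he])).symm
  have hGyb : G.Adj y b := hG y b hby.symm (by simp [he])
  unfold HasRepresentatives
  rw [ha, hb, hv]
  by_cases hS : a ∈ S ∧ b ∈ S
  · refine ⟨{x, y}, ?_, Or.inr ?_⟩
    · rintro v (rfl | rfl | rfl | rfl) hvS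
      · exact absurd hS.1 hvS
      · exact absurd hS.2 hvS
      · exact Or.inr (Or.inr ⟨v, by simp, .refl hvS⟩)
      · exact Or.inr (Or.inr ⟨v, by simp, .refl hvS⟩)
    · have : ({a, b} : Set V).ncard ≤ (S ∩ {a, b, x, y}).ncard :=
        Set.ncard_le_ncard (by rintro v (rfl | rfl) <;> simp [hS]) (Set.toFinite _)
      rw [Set.ncard_pair hab] at this
      rw [Finset.card_pair hxy]
      omega
  · refine ⟨∅, ?_, ?_⟩
    · have hmid : ∀ v, G.Adj v a → G.Adj v b → v ∉ S →
          ReachableOff G S v a ∨ ReachableOff G S v b ∨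
            ∃ w ∈ (∅ : Finset V), ReachableOff G S v w := by
        intro v hva hvb hvS
        by_cases haS : a ∈ S
        · exact Or.inr (Or.inl (.of_adj hvb hvS fun hbS => hS ⟨haS, hbS⟩))
        · exact Or.inl (.of_adj hva hvS haS)
      rintro v (rfl | rfl | rfl | rfl) hvS
      · exact Or.inl (.refl hvS)
      · exact Or.inr (Or.inl (.refl hvS))
      · exact hmid _ hGax hGxb hvS
      · exact hmid _ hGay hGyb hvS
    · rcases (S ∩ {a, b, x, y}).eq_empty_or_nonempty with h0 | h0
      · have hnot : ∀ v ∈ ({a, b, x, y} : Set V), v ∉ S := fun v hv hvS =>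
          Set.notMem_empty v (h0 ▸ ⟨hvS, hv⟩)
        have haS := hnot a (by simp)
        have hbS := hnot b (by simp)
        have hxS := hnot x (by simp)
        exact Or.inl ⟨rfl, (ReachableOff.of_adj hGax hxS haS).symm.trans (.of_adj hGxb hxS hbS)⟩
      · have := (Set.ncard_pos (Set.toFinite _)).2 h0
        exact Or.inr (by rw [Finset.card_empty]; omega)

theorem HasRepresentatives.series {V : Type*} [Finite V] {G : SimpleGraph V} {S : Set V}
    {t r : SPTree V} (ht : HasRepresentatives G S t) (hr : HasRepresentatives G S r)
    (hjoin : t.tgt = r.src) (hinter : t.verts ∩ r.verts = {t.tgt}) :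
    HasRepresentatives G S (.series t r) := by
  classical
  obtain ⟨R₁, hcov₁, hcard₁⟩ := ht
  obtain ⟨R₂, hcov₂, hcard₂⟩ := hr
  rw [← hjoin] at hcov₂ hcard₂
  have hcount : (S ∩ (t.verts ∪ r.verts)).ncard + (S ∩ {t.tgt}).ncard =
      (S ∩ t.verts).ncard + (S ∩ r.verts).ncard := by
    rw [← hinter, Set.inter_union_distrib_left, Set.inter_inter_distrib_left]
    exact Set.ncard_union_add_ncard_inter _ _
  simp only [HasRepresentatives, SPTree.src, SPTree.tgt, SPTree.verts]
  by_cases hs : t.tgt ∈ S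
  · have hne : ∀ v, ¬ ReachableOff G S v t.tgt := fun v h => h.right_notMem hs
    have hone : (S ∩ {t.tgt}).ncard = 1 := by
      rw [Set.inter_eq_right.2 (Set.singleton_subset_iff.2 hs), Set.ncard_singleton]
    have hcard₁ := hcard₁.resolve_left fun h => hne _ h.2
    have hcard₂ := hcard₂.resolve_left fun h => hne _ h.2.symm
    refine ⟨R₁ ∪ R₂, ?_, Or.inr ?_⟩
    · rintro v (hv | hv) hvS
      · rcases hcov₁ v hv hvS with h | h | ⟨w, hw, h⟩
        · exact Or.inl h
        · exact absurd h (hne v)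
        · exact Or.inr (Or.inr ⟨w, Finset.mem_union_left _ hw, h⟩)
      · rcases hcov₂ v hv hvS with h | h | ⟨w, hw, h⟩
        · exact absurd h (hne v)
        · exact Or.inr (Or.inl h)
        · exact Or.inr (Or.inr ⟨w, Finset.mem_union_right _ hw, h⟩)
    · have := Finset.card_union_le R₁ R₂
      omega
  · have hzero : (S ∩ {t.tgt}).ncard = 0 := by
      rw [Set.inter_singleton_eq_empty.2 hs, Set.ncard_empty]
    rcases hcard₁ with ⟨rfl, h₁⟩ | hcard₁
    · refine ⟨R₂, ?_, ?_⟩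
      · rintro v (hv | hv) hvS
        · rcases hcov₁ v hv hvS with h | h | ⟨w, hw, -⟩
          · exact Or.inl h
          · exact Or.inl (h.trans h₁.symm)
          · simp at hw
        · exact (hcov₂ v hv hvS).imp_left fun h => h.trans h₁.symm
      · rcases hcard₂ with ⟨h, h₂⟩ | hcard₂
        · exact Or.inl ⟨h, h₁.trans h₂⟩
        · exact Or.inr (by omega)
    · rcases hcard₂ with ⟨rfl, h₂⟩ | hcard₂
      · refine ⟨R₁, ?_, Or.inr (by omega)⟩
        rintro v (hv | hv) hvS
        · exact (hcov₁ v hv hvS).imp_right (Or.imp_left fun h => h.trans h₂)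
        · rcases hcov₂ v hv hvS with h | h | ⟨w, hw, -⟩
          · exact Or.inr (Or.inl (h.trans h₂))
          · exact Or.inr (Or.inl h)
          · simp at hw
      · refine ⟨insert t.tgt (R₁ ∪ R₂), ?_, Or.inr ?_⟩
        · rintro v (hv | hv) hvS
          · rcases hcov₁ v hv hvS with h | h | ⟨w, hw, h⟩
            · exact Or.inl h
            · exact Or.inr (Or.inr ⟨_, Finset.mem_insert_self _ _, h⟩)
            · exact Or.inr (Or.inr ⟨w, by simp [hw], h⟩)
          · rcases hcov₂ v hv hvS with h | h | ⟨w, hw, h⟩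
            · exact Or.inr (Or.inr ⟨_, Finset.mem_insert_self _ _, h⟩)
            · exact Or.inr (Or.inl h)
            · exact Or.inr (Or.inr ⟨w, by simp [hw], h⟩)
        · have := Finset.card_union_le R₁ R₂
          have := Finset.card_insert_le t.tgt (R₁ ∪ R₂)
          omega

theorem IsBracelet.hasRepresentatives {V : Type*} [Finite V] {G : SimpleGraph V} {S : Set V}
    {T : SPTree V} (hbr : IsBracelet T) (hWF : T.WF)
    (hG : ∀ u v, u ≠ v → s(u, v) ∈ T.edges → G.Adj u v) : HasRepresentatives G S T := by
  induction hbr with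
  | single h => exact h.hasRepresentatives hWF hG
  | cons h _ ih =>
    obtain ⟨ht, hr, hjoin, hinter⟩ := hWF
    exact (h.hasRepresentatives ht fun u v huv he => hG u v huv (Or.inl he)).series
      (ih hr fun u v huv he => hG u v huv (Or.inr he)) hjoin hinter

theorem HasRepresentatives.numComp_lt {V : Type*} [Finite V] {G : SimpleGraph V} {S : Set V}
    {T : SPTree V} (h : HasRepresentatives G S T) (hverts : T.verts = Set.univ)
    (hadj : T.src ≠ T.tgt → G.Adj T.src T.tgt) (hS : IsCutset G S) :
    numComp G S < 2 * S.ncard := by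
  classical
  obtain ⟨R, hcov, hcard⟩ := h
  rw [hverts, Set.inter_univ] at hcard
  obtain ⟨z, hz⟩ : ∃ z, ∀ v, v ∉ S → ∃ w ∈ insert z R, ReachableOff G S v w := by
    have hsrc : T.tgt ∈ S ∨ ReachableOff G S T.tgt T.src →
        ∀ v, v ∉ S → ∃ w ∈ insert T.src R, ReachableOff G S v w := by
      intro hst v hv
      rcases hcov v (hverts ▸ Set.mem_univ v) hv with h | h | ⟨w, hw, h⟩
      · exact ⟨_, Finset.mem_insert_self _ _, h⟩
      · exact ⟨_, Finset.mem_insert_self _ _, h.trans (hst.resolve_left h.right_notMem)⟩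
      · exact ⟨w, Finset.mem_insert_of_mem hw, h⟩
    by_cases ht : T.tgt ∈ S
    · exact ⟨_, hsrc (Or.inl ht)⟩
    by_cases hs : T.src ∈ S
    · refine ⟨T.tgt, fun v hv => ?_⟩
      rcases hcov v (hverts ▸ Set.mem_univ v) hv with h | h | ⟨w, hw, h⟩
      · exact absurd hs h.right_notMem
      · exact ⟨_, Finset.mem_insert_self _ _, h⟩
      · exact ⟨w, Finset.mem_insert_of_mem hw, h⟩
    · refine ⟨_, hsrc (Or.inr ?_)⟩
      by_cases hst : T.src = T.tgt
      · exact hst ▸ .refl hs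
      · exact .of_adj (hadj hst).symm ht hs
  have hle := (numComp_le_card _ hz).trans (Finset.card_insert_le z R)
  unfold IsCutset at hS
  rcases hcard with ⟨rfl, -⟩ | hcard
  · simp at hle
    omega
  · omega

theorem isCutset_compl_pair_s18 {V : Type*} {G : SimpleGraph V} {x y : V} (hxy : x ≠ y)
    (hadj : ¬ G.Adj x y) : IsCutset G ({x, y}ᶜ) := by
  unfold IsCutset numComp
  rw [compl_compl]
  have : Finite ({x, y} : Set V) := Set.toFinite _
  have hbot : SimpleGraph.induce {x, y} G = ⊥ := by
    ext ⟨u, hu⟩ ⟨v, hv⟩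
    rcases hu with rfl | rfl <;> rcases hv with rfl | rfl <;> simp [hadj]
    simpa [G.adj_comm] using hadj
  rw [Finite.one_lt_card_iff_nontrivial]
  refine ⟨(SimpleGraph.induce {x, y} G).connectedComponentMk ⟨x, by simp⟩,
    (SimpleGraph.induce {x, y} G).connectedComponentMk ⟨y, by simp⟩, fun h => ?_⟩
  have := SimpleGraph.ConnectedComponent.exact h
  rw [hbot, SimpleGraph.reachable_bot] at this
  exact hxy (congrArg Subtype.val this)

/-- Over a finite graph with a cutset the infimum defining the toughness is attained. -/
theorem exists_toughness_eq {V : Type*} [Finite V] {G : SimpleGraph V}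
    (h : ∃ S, IsCutset G S) :
    ∃ S, IsCutset G S ∧ toughness G = (S.ncard : ℝ) / (numComp G S : ℝ) := by
  have hfin : {r : ℝ | ∃ S : Set V, IsCutset G S ∧
      r = (S.ncard : ℝ) / (numComp G S : ℝ)}.Finite :=
    (Set.finite_range fun S : Set V => (S.ncard : ℝ) / (numComp G S : ℝ)).subset
      fun r ⟨S, _, hr⟩ => ⟨S, hr.symm⟩
  obtain ⟨S, hS⟩ := h
  have hne : {r : ℝ | ∃ S : Set V, IsCutset G S ∧
      r = (S.ncard : ℝ) / (numComp G S : ℝ)}.Nonempty := ⟨_, S, hS, rfl⟩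
  exact hne.csInf_mem hfin

/-- If `G` is the parallel join of a bracelet `B_ℓ` and a single edge joining the two end
terminals, then `τ(G) > 1/2`. -/
theorem bracelet_plus_edge_toughness {V : Type*} [Fintype V]
    (T : SPTree V) (hWF : T.WF) (hverts : T.verts = Set.univ) (hbr : IsBracelet T)
    (G : SimpleGraph V)
    (hG : G = SimpleGraph.fromEdgeSet (T.edges ∪ {s(T.src, T.tgt)})) :
    1 / 2 < toughness G := by
  obtain ⟨x, y, hxy, hne, hsrc, htgt⟩ := hbr.exists_nonadjacent hWF
  have hadj : ¬ G.Adj x y := by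
    rw [hG, SimpleGraph.fromEdgeSet_adj]
    rintro ⟨h | h, -⟩
    · exact hne h
    · rcases Sym2.eq_iff.1 h with h | h
      · exact hsrc h.1
      · exact htgt h.1
  obtain ⟨S, hS, hτ⟩ := exists_toughness_eq ⟨_, isCutset_compl_pair_s18 hxy hadj⟩
  have hrep : HasRepresentatives G S T := hbr.hasRepresentatives hWF fun u v huv he => by
    rw [hG, SimpleGraph.fromEdgeSet_adj]
    exact ⟨Or.inl he, huv⟩
  have hlt := hrep.numComp_lt hverts (fun hst => by
    rw [hG, SimpleGraph.fromEdgeSet_adj]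
    exact ⟨Or.inr rfl, hst⟩) hS
  have hpos : (0 : ℝ) < numComp G S := by
    exact_mod_cast lt_trans zero_lt_one hS
  have hlt' : (numComp G S : ℝ) < 2 * S.ncard := by exact_mod_cast hlt
  rw [hτ, lt_div_iff₀ hpos]
  linarith
end
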